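/- arXiv:2411.08653 — 2 statements merged into one kernel-verified Lean document; each statement's English description precedes it below -/
import Mathlib

section
/- Let 1 ≤ k ≤ n and let 𝕴 : 𝕏_n × 𝕏_n → ℝ be an n-symmetric kernel. Define 𝕴'(x_{1⃗}, x_{2⃗}) := ½ ∫ 𝕴(x_{1⃗}, y) dμ_k^n[x_{2⃗}, x_{1⃗}](y) + ½ ∫ 𝕴(x_{2⃗}, y) dμ_k^n[x_{1⃗}, x_{2⃗}](y). Then: (a) for every discrete measure μ ∈ ℳ_k(𝕏_n), ∫∫ (−1)^k 𝕴' dμ dμ = ∫∫ (−1)^k 𝕴 dμ dμ; (b) 𝕴'(x_{1⃗}, x_{2⃗}) = 0 whenever x_i^1 = x_i^2 for at least n−k+1 indices i; (c) if 𝕴(x_{1⃗}, x_{2⃗}) = 0 whenever x_i^1 = x_i^2 for at least n−k+1 indices i, then 𝕴' = 𝕴. -/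
noncomputable section

open Finset

namespace PDIPaper

variable {ι : Type*} [Fintype ι] [DecidableEq ι] {X : ι → Type*}

/-- The grid point `x_α` determined by grid data `x` and a multi-index `α`. -/
def gridPt {m : ℕ} (x : ∀ i, Fin m → X i) (α : ι → Fin m) : ∀ i, X i :=
  fun i => x i (α i)

/-- The point whose coordinates in `F` come from `a` and whose coordinates outside
`F` come from `b` (the point `a_F + b_{F^c}`). -/
def comb (F : Finset ι) (a b : ∀ i, X i) : ∀ i, X i :=
  fun i => if i ∈ F then a i else b i

/-- Glue an `F`-indexed point and an `Fᶜ`-indexed point into a full point. -/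
def glue (F : Finset ι) (a : ∀ i : {i // i ∈ F}, X i.1)
    (b : ∀ i : {i // i ∈ Fᶜ}, X i.1) : ∀ i, X i :=
  fun i => if h : i ∈ F then a ⟨i, h⟩ else b ⟨i, Finset.mem_compl.mpr h⟩

/-- The coefficients `c` of a discrete measure (supported on a grid with `m` points
in each coordinate) belong to `ℳ_k`: for every coordinate subset `F` of cardinality
`n - k + 1` and every fixed multi-index `β` off `F`, the sum of the coefficients over
the `F`-indices vanishes. -/
def MemM (k : ℕ) {m : ℕ} (c : (ι → Fin m) → ℝ) : Prop :=
  ∀ F : Finset ι, F.card = Fintype.card ι - k + 1 →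
    ∀ β : ι → Fin m,
      (∑ σ : {i // i ∈ F} → Fin m,
        c fun i => if h : i ∈ F then σ ⟨i, h⟩ else β i) = 0

/-- The double integral `∬ I dμ dμ` of a kernel against a discrete measure with
grid `x` and coefficients `c`. -/
def dSum {m : ℕ} (I : (∀ i, X i) → (∀ i, X i) → ℝ)
    (x : ∀ i, Fin m → X i) (c : (ι → Fin m) → ℝ) : ℝ :=
  ∑ α : ι → Fin m, ∑ β : ι → Fin m, c α * c β * I (gridPt x α) (gridPt x β)

/-- `sel x1 x2 α` is the point `x_α` for `α ∈ {1,2}^n`, encoded by `Bool`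
(`false ↦ 1`, `true ↦ 2`). -/
def sel (x1 x2 : ∀ i, X i) (α : ι → Bool) : ∀ i, X i :=
  fun i => if α i then x2 i else x1 i

/-- `n`-symmetry of a kernel: `I (x_α) (x_{3⃗-α}) = I x1 x2` for all `α ∈ {1,2}^n`. -/
def NSymm (I : (∀ i, X i) → (∀ i, X i) → ℝ) : Prop :=
  ∀ (x1 x2 : ∀ i, X i) (α : ι → Bool),
    I (sel x1 x2 α) (sel x1 x2 fun i => !(α i)) = I x1 x2

/-- Complete `n`-symmetry of a kernel. -/
def CompleteNSymm (I : (∀ i, X i) → (∀ i, X i) → ℝ) : Prop :=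
  NSymm I ∧ ∀ (F : Finset ι) (x1 x2 x3 x4 : ∀ i, X i),
    I (comb F x1 x3) (comb F x2 x3) = I (comb F x1 x4) (comb F x2 x4)

/-- Positive definite independent kernel of order `k`: an `n`-symmetric kernel with
`∬ (-1)^k I dμ dμ ≥ 0` for every discrete measure `μ ∈ ℳ_k`. -/
def IsPDI (k : ℕ) (I : (∀ i, X i) → (∀ i, X i) → ℝ) : Prop :=
  NSymm I ∧
    ∀ (m : ℕ) (x : ∀ i, Fin m → X i), (∀ i, Function.Injective (x i)) →
      ∀ c : (ι → Fin m) → ℝ, MemM k c →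
        0 ≤ (-1 : ℝ) ^ k * dSum I x c

/-- Strictly positive definite independent kernel of order `k`. -/
def IsSPDI (k : ℕ) (I : (∀ i, X i) → (∀ i, X i) → ℝ) : Prop :=
  NSymm I ∧
    ∀ (m : ℕ) (x : ∀ i, Fin m → X i), (∀ i, Function.Injective (x i)) →
      ∀ c : (ι → Fin m) → ℝ, MemM k c → (∃ α, c α ≠ 0) →
        0 < (-1 : ℝ) ^ k * dSum I x c

/-- The kernel vanishes on the extended diagonal `Δ_{k-1}^n`, i.e. on pairs of points
agreeing in at least `n - k + 1` coordinates. -/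
def ZeroAtDiag (k : ℕ) (I : (∀ i, X i) → (∀ i, X i) → ℝ) : Prop :=
  ∀ x1 x2 : ∀ i, X i,
    (∃ s : Finset ι, s.card = Fintype.card ι - k + 1 ∧ ∀ i ∈ s, x1 i = x2 i) →
    I x1 x2 = 0

/-- Conditionally negative definite (CND) symmetric kernel. -/
def IsCND {Z : Type*} (γ : Z → Z → ℝ) : Prop :=
  (∀ a b, γ a b = γ b a) ∧
    ∀ (m : ℕ) (z : Fin m → Z) (c : Fin m → ℝ), (∑ i, c i) = 0 →
      (∑ i, ∑ j, c i * c j * γ (z i) (z j)) ≤ 0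

/-- Positive definite kernel (quadratic-form condition). -/
def IsPD {Z : Type*} (K : Z → Z → ℝ) : Prop :=
  ∀ (m : ℕ) (z : Fin m → Z) (c : Fin m → ℝ),
    0 ≤ ∑ i, ∑ j, c i * c j * K (z i) (z j)

/-- Integral of `f` against the discrete measure
`μ_k^n[x1, x2] = δ_{x1} + ∑_{j=0}^{k-1} (-1)^{k-j} C(n-j-1, n-k) ∑_{|F|=j} δ_{x1_F + x2_{F^c}}`. -/
def muInt (k : ℕ) (x1 x2 : ∀ i, X i) (f : (∀ i, X i) → ℝ) : ℝ :=
  f x1 + ∑ j ∈ Finset.range k,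
    (-1 : ℝ) ^ (k - j) *
      ((Nat.choose (Fintype.card ι - j - 1) (Fintype.card ι - k) : ℕ) : ℝ) *
      ∑ F ∈ Finset.powersetCard j (Finset.univ : Finset ι), f (comb F x1 x2)

/-- The kernel `𝕴'` of Lemma `PDI2simpli`:
`𝕴'(x1,x2) = ½ ∫ 𝕴(x1,y) dμ_k^n[x2,x1](y) + ½ ∫ 𝕴(x2,y) dμ_k^n[x1,x2](y)`. -/
def stmt8Kernel {n : ℕ} {X : Fin n → Type*} (k : ℕ)
    (I : (∀ i, X i) → (∀ i, X i) → ℝ) : (∀ i, X i) → (∀ i, X i) → ℝ :=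
  fun x1 x2 =>
    (1 / 2 : ℝ) * muInt k x2 x1 (fun y => I x1 y) +
      (1 / 2 : ℝ) * muInt k x1 x2 (fun y => I x2 y)

/-!
Put `n = |ι|` and `p(j) = (-1)^k * C(n - 1 - j, n - k)`, a polynomial of degree `n - k` in `j`. The
weights of `μ_k^n[a, b]` are the values `(-1)^j * p(j)`: the generalized binomial coefficient
vanishes for `k ≤ j < n`, and at `j = n` the formula gives the weight `1` of `δ_a`. If `a` and `b`
agree on more than `n - k` indices, summing the weights over the part of `F` among these indices
takes a finite difference of `p` of order larger than its degree, so `μ_k^n[a, b] = 0`. On the other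
hand every term except `δ_a` leaves at least `n - k + 1` coordinates of `b`: such a term is
annihilated by measures in `ℳ_k`, and vanishes for kernels that are zero on the extended diagonal.
-/

section AlternatingSums

theorem sum_powerset_union_of_disjoint {α M : Type*} [DecidableEq α] [AddCommMonoid M]
    {s t : Finset α} (hst : Disjoint s t) (g : Finset α → M) :
    ∑ F ∈ (s ∪ t).powerset, g F = ∑ G ∈ s.powerset, ∑ H ∈ t.powerset, g (G ∪ H) := by
  induction t using Finset.induction_on generalizing g with
  | empty => simp
  | insert a t ha ih =>
    obtain ⟨has, hst⟩ := disjoint_insert_right.mp hst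
    simp only [union_insert, sum_powerset_insert ha, sum_add_distrib,
      sum_powerset_insert (notMem_union.mpr ⟨has, ha⟩), ih hst]

theorem sum_powerset_neg_one_pow_mul_choose_eq_zero {α R : Type*} [Ring R] [BinomialRing R]
    {s : Finset α} {d : ℕ} (hd : d < #s) (r : R) :
    ∑ H ∈ s.powerset, (-1) ^ #H * Ring.choose (r - #H) d = 0 := by
  classical
  induction s using Finset.induction_on generalizing d r with
  | empty => simp at hd
  | insert a t ha ih =>
    have pair_up : ∀ H ∈ t.powerset,
        (-1) ^ #H * Ring.choose (r - #H) d +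
            (-1) ^ #(insert a H) * Ring.choose (r - #(insert a H)) d =
          (-1) ^ #H * (Ring.choose (r - 1 - #H + 1) d - Ring.choose (r - 1 - #H) d) := by
      intro H hH
      rw [card_insert_of_notMem fun h => ha (mem_powerset.mp hH h), pow_succ, mul_neg_one,
        neg_mul, ← sub_eq_add_neg, ← mul_sub, Nat.cast_succ, sub_add_eq_sub_sub_swap,
        sub_right_comm r 1, sub_add_cancel]
    rw [sum_powerset_insert ha, ← sum_add_distrib, sum_congr rfl pair_up]
    cases d with
    | zero => simp
    | succ d =>
      simp only [Ring.choose_succ_succ, add_sub_cancel_right]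
      exact ih (by simpa [ha] using hd) (r - 1)

theorem choose_neg_one {R : Type*} [Ring R] [BinomialRing R] (d : ℕ) :
    Ring.choose (-1 : R) d = (-1) ^ d := by
  induction d with
  | zero => simp
  | succ d ih =>
    have pascal := Ring.choose_succ_succ (-1 : R) d
    rw [neg_add_cancel, Ring.choose_zero_succ, ih] at pascal
    rw [pow_succ, mul_neg_one, eq_neg_of_add_eq_zero_right pascal.symm]

end AlternatingSums

section Coefficients

/-- The weight in `μ_k^n[a, b]` of the point `a_F + b_{F^c}` with `|F| = j`, as a single formula for
all `j ≤ n`. It is `(-1)^j` times a polynomial in `j` of degree `n - k`, since `Ring.choose` is the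
generalized binomial coefficient. -/
def muCoeff (n k j : ℕ) : ℝ :=
  (-1) ^ (k + j) * Ring.choose ((n : ℝ) - 1 - j) (n - k)

variable {n k j : ℕ}

theorem muCoeff_of_lt (hj : j < n) :
    muCoeff n k j = (-1) ^ (k + j) * (n - j - 1).choose (n - k) := by
  have cast_sub : (n : ℝ) - 1 - j = (n - j - 1 : ℕ) := by
    rw [Nat.sub_sub, Nat.cast_sub hj]
    push_cast
    ring
  rw [muCoeff, cast_sub, Ring.choose_natCast]

theorem muCoeff_eq_zero (hkj : k ≤ j) (hj : j < n) : muCoeff n k j = 0 := by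
  rw [muCoeff_of_lt hj, Nat.choose_eq_zero_of_lt (by lia), Nat.cast_zero, mul_zero]

theorem muCoeff_self (hk : k ≤ n) : muCoeff n k n = 1 := by
  have exponent_even : Even (k + n + (n - k)) := ⟨n, by lia⟩
  rw [muCoeff, sub_sub_cancel_left, choose_neg_one, ← pow_add, exponent_even.neg_one_pow]

theorem sum_powerset_muCoeff_eq_zero {α : Type*} {s : Finset α} (hs : n - k < #s) (m : ℕ) :
    ∑ H ∈ s.powerset, muCoeff n k (m + #H) = 0 := by
  have alternating := sum_powerset_neg_one_pow_mul_choose_eq_zero hs ((n : ℝ) - 1 - m)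
  rw [← mul_zero ((-1 : ℝ) ^ (k + m)), ← alternating, mul_sum]
  refine sum_congr rfl fun H _ => ?_
  rw [muCoeff, Nat.cast_add, sub_add_eq_sub_sub, ← add_assoc, pow_add _ (k + m), mul_assoc]

theorem sum_muCoeff_mul {α : Type*} [Fintype α] (hk : k ≤ Fintype.card α)
    (g : Finset α → ℝ) :
    ∑ F, muCoeff (Fintype.card α) k #F * g F =
      g univ + ∑ F with #F < k, muCoeff (Fintype.card α) k #F * g F := by
  rw [← sum_filter_not_add_sum_filter univ (#· < k)]
  congr 1
  rw [sum_eq_single_of_mem univ (by simpa using hk), card_univ, muCoeff_self hk, one_mul]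
  intro F hF hF_univ
  rw [muCoeff_eq_zero (by simpa using hF) ((card_lt_iff_ne_univ F).mpr hF_univ), zero_mul]

theorem sum_muCoeff_mul_eq_apply_univ {α : Type*} [Fintype α] (hk : k ≤ Fintype.card α)
    {g : Finset α → ℝ} (hg : ∀ F, #F < k → g F = 0) :
    ∑ F, muCoeff (Fintype.card α) k #F * g F = g univ := by
  rw [sum_muCoeff_mul hk, add_eq_left]
  exact sum_eq_zero fun F hF => by rw [hg F (mem_filter_univ F |>.mp hF), mul_zero]

end Coefficients

section PointMasses

variable {k : ℕ}

theorem comb_univ (a b : ∀ i, X i) : comb univ a b = a := by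
  ext i
  simp [comb]

omit [Fintype ι] in
theorem comb_union_eq_left {a b : ∀ i, X i} (G : Finset ι) {H : Finset ι}
    (hab : ∀ i ∈ H, a i = b i) : comb (G ∪ H) a b = comb G a b := by
  ext i
  by_cases hi : i ∈ H <;> simp [comb, hi, hab]

theorem muInt_eq_sum (hk : k ≤ Fintype.card ι) (a b : ∀ i, X i) (f : (∀ i, X i) → ℝ) :
    muInt k a b f = ∑ F, muCoeff (Fintype.card ι) k #F * f (comb F a b) := by
  have card_mem_range : ∀ F ∈ ({F | #F < k} : Finset (Finset ι)), #F ∈ range k := by simp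
  rw [sum_muCoeff_mul hk, comb_univ, muInt, ← sum_fiberwise_of_maps_to card_mem_range]
  congr 1
  refine sum_congr rfl fun j hj => ?_
  have hjk : j < k := mem_range.mp hj
  have fiber_eq : ({F ∈ {F : Finset ι | #F < k} | #F = j} : Finset (Finset ι)) =
      powersetCard j univ := by
    ext F
    simp only [mem_filter, mem_univ, true_and, mem_powersetCard, subset_univ]
    lia
  have sign_eq : (-1 : ℝ) ^ (k - j) = (-1) ^ (k + j) := by
    rw [show k + j = k - j + 2 * j by lia, pow_add, pow_mul, neg_one_sq, one_pow, mul_one]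
  rw [fiber_eq, mul_sum, sign_eq]
  refine sum_congr rfl fun F hF => ?_
  rw [(mem_powersetCard.mp hF).2, muCoeff_of_lt (hjk.trans_le hk)]

theorem muInt_eq_zero_of_eqOn (hk : k ≤ Fintype.card ι) {a b : ∀ i, X i} {s : Finset ι}
    (hs : Fintype.card ι - k < #s) (hab : ∀ i ∈ s, a i = b i) (f : (∀ i, X i) → ℝ) :
    muInt k a b f = 0 := by
  rw [muInt_eq_sum hk, ← powerset_univ, ← union_compl s, union_comm,
    sum_powerset_union_of_disjoint disjoint_compl_left]
  refine sum_eq_zero fun G hG => ?_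
  calc ∑ H ∈ s.powerset, muCoeff (Fintype.card ι) k #(G ∪ H) * f (comb (G ∪ H) a b)
      = ∑ H ∈ s.powerset, muCoeff (Fintype.card ι) k (#G + #H) * f (comb G a b) := by
        refine sum_congr rfl fun H hH => ?_
        rw [mem_powerset] at hG hH
        rw [card_union_of_disjoint (disjoint_compl_left.mono hG hH),
          comb_union_eq_left G fun i hi => hab i (hH hi)]
    _ = 0 := by rw [← sum_mul, sum_powerset_muCoeff_eq_zero hs, zero_mul]

theorem exists_subset_compl_card_eq (hk : k ≤ Fintype.card ι) {F : Finset ι} (hF : #F < k) :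
    ∃ T ⊆ Fᶜ, #T = Fintype.card ι - k + 1 :=
  exists_subset_card_eq (by rw [card_compl]; lia)

end PointMasses

section IndependentMeasures

variable {k m : ℕ} {c : (ι → Fin m) → ℝ}

theorem MemM.sum_mul_eq_zero (hc : MemM k c) (hk : k ≤ Fintype.card ι) {F : Finset ι}
    (hF : #F < k) {h : (ι → Fin m) → ℝ} (hh : DependsOn h F) : ∑ β, c β * h β = 0 := by
  obtain ⟨T, hTF, hT⟩ := exists_subset_compl_card_eq hk hF
  let e := Equiv.piEquivPiSubtypeProd (· ∈ T) fun _ => Fin m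
  rw [← e.symm.sum_comp, Fintype.sum_prod_type_right]
  refine sum_eq_zero fun τ _ => ?_
  rcases isEmpty_or_nonempty ({i // i ∈ T} → Fin m) with _ | ⟨⟨σ₀⟩⟩
  · exact Fintype.sum_empty _
  · have h_const (σ) : h (e.symm (σ, τ)) = h (e.symm (σ₀, τ)) := hh fun i hi => by
      have hiT : i ∉ T := fun hiT => mem_compl.mp (hTF hiT) hi
      simp [e, hiT]
    have h_mass : ∑ σ, c (e.symm (σ, τ)) = 0 := by
      rw [← hc T hT (e.symm (σ₀, τ))]
      refine sum_congr rfl fun σ _ => congrArg c ?_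
      ext i
      by_cases hi : i ∈ T <;> simp [e, hi]
    simp only [h_const, ← sum_mul, h_mass, zero_mul]

theorem MemM.sum_mul_muInt (hc : MemM k c) (hk : k ≤ Fintype.card ι) (x : ∀ i, Fin m → X i)
    (a : ∀ i, X i) (f : (∀ i, X i) → ℝ) :
    ∑ β, c β * muInt k (gridPt x β) a f = ∑ β, c β * f (gridPt x β) := by
  have low_order (F : Finset ι) (hF : #F < k) :
      ∑ β, c β * f (comb F (gridPt x β) a) = 0 := by
    refine hc.sum_mul_eq_zero hk hF fun β β' hββ' => congrArg f ?_
    ext i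
    by_cases hi : i ∈ F <;> simp [comb, gridPt, hi, hββ' i]
  calc ∑ β, c β * muInt k (gridPt x β) a f
      = ∑ F, muCoeff (Fintype.card ι) k #F * ∑ β, c β * f (comb F (gridPt x β) a) := by
        simp only [muInt_eq_sum hk, mul_sum, mul_left_comm (c _)]
        exact sum_comm
    _ = ∑ β, c β * f (gridPt x β) := by
        simp only [sum_muCoeff_mul_eq_apply_univ hk low_order, comb_univ]

end IndependentMeasures

section DiagonalReduction

variable {k : ℕ} {I : (∀ i, X i) → (∀ i, X i) → ℝ}

omit [Fintype ι] [DecidableEq ι] in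
theorem NSymm.swap (hI : NSymm I) (a b : ∀ i, X i) : I b a = I a b :=
  hI a b fun _ => true

theorem dSum_average_swap {m : ℕ} (x : ∀ i, Fin m → X i) (c : (ι → Fin m) → ℝ) :
    dSum (fun a b => (1 / 2 : ℝ) * I a b + (1 / 2 : ℝ) * I b a) x c = dSum I x c := by
  have dSum_swap : dSum (fun a b => I b a) x c = dSum I x c := by
    simp only [dSum]
    rw [sum_comm]
    simp only [mul_comm (c _) (c _)]
  calc dSum (fun a b => (1 / 2 : ℝ) * I a b + (1 / 2 : ℝ) * I b a) x c
      = (1 / 2 : ℝ) * dSum I x c + (1 / 2 : ℝ) * dSum (fun a b => I b a) x c := by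
        simp only [dSum, mul_add, sum_add_distrib, mul_sum, mul_left_comm]
    _ = dSum I x c := by rw [dSum_swap, ← add_mul, add_halves, one_mul]

/-- The one-sided reduction `∫ 𝕴(x1, y) dμ_k^n[x2, x1](y)` of a kernel, which corrects `𝕴` so as to
vanish on the extended diagonal. -/
def diagReduction (k : ℕ) (I : (∀ i, X i) → (∀ i, X i) → ℝ) : (∀ i, X i) → (∀ i, X i) → ℝ :=
  fun x1 x2 => muInt k x2 x1 (I x1)

/-- The kernel `𝕴'` over an arbitrary finite index type, as the symmetrization of the one-sided
reduction; for the index type `Fin n` it is `stmt8Kernel` by definition. -/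
def symmDiagReduction (k : ℕ) (I : (∀ i, X i) → (∀ i, X i) → ℝ) :
    (∀ i, X i) → (∀ i, X i) → ℝ :=
  fun x1 x2 => (1 / 2 : ℝ) * diagReduction k I x1 x2 + (1 / 2 : ℝ) * diagReduction k I x2 x1

theorem dSum_diagReduction (hk : k ≤ Fintype.card ι) {m : ℕ} (x : ∀ i, Fin m → X i)
    {c : (ι → Fin m) → ℝ} (hc : MemM k c) : dSum (diagReduction k I) x c = dSum I x c := by
  simp only [dSum, diagReduction, mul_assoc, ← mul_sum, hc.sum_mul_muInt hk]

theorem dSum_symmDiagReduction (hk : k ≤ Fintype.card ι) {m : ℕ} (x : ∀ i, Fin m → X i)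
    {c : (ι → Fin m) → ℝ} (hc : MemM k c) :
    dSum (symmDiagReduction k I) x c = dSum I x c :=
  (dSum_average_swap x c).trans (dSum_diagReduction hk x hc)

theorem zeroAtDiag_diagReduction (hk : k ≤ Fintype.card ι) :
    ZeroAtDiag k (diagReduction k I) := fun _ _ ⟨_, hs, hx⟩ =>
  muInt_eq_zero_of_eqOn hk (hs ▸ Nat.lt_succ_self _) (fun i hi => (hx i hi).symm) _

theorem ZeroAtDiag.diagReduction_eq (hI : ZeroAtDiag k I) (hk : k ≤ Fintype.card ι) :
    diagReduction k I = I := by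
  ext x1 x2
  have low_order (F : Finset ι) (hF : #F < k) : I x1 (comb F x2 x1) = 0 := by
    obtain ⟨T, hTF, hT⟩ := exists_subset_compl_card_eq hk hF
    exact hI _ _ ⟨T, hT, fun i hi => (if_neg (mem_compl.mp (hTF hi))).symm⟩
  rw [diagReduction, muInt_eq_sum hk, sum_muCoeff_mul_eq_apply_univ hk low_order, comb_univ]

theorem zeroAtDiag_symmDiagReduction (hk : k ≤ Fintype.card ι) :
    ZeroAtDiag k (symmDiagReduction k I) := by
  rintro x1 x2 ⟨s, hs, hx⟩
  rw [symmDiagReduction, zeroAtDiag_diagReduction hk x1 x2 ⟨s, hs, hx⟩,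
    zeroAtDiag_diagReduction hk x2 x1 ⟨s, hs, fun i hi => (hx i hi).symm⟩, mul_zero, add_zero]

theorem ZeroAtDiag.symmDiagReduction_eq (hI : ZeroAtDiag k I) (hk : k ≤ Fintype.card ι)
    (hsymm : ∀ a b, I b a = I a b) : symmDiagReduction k I = I := by
  ext x1 x2
  rw [symmDiagReduction, hI.diagReduction_eq hk, hsymm x1 x2, ← add_mul, add_halves, one_mul]

theorem statement8_general (hk : k ≤ Fintype.card ι) (I : (∀ i, X i) → (∀ i, X i) → ℝ) :
    (∀ (m : ℕ) (x : ∀ i, Fin m → X i) (c : (ι → Fin m) → ℝ), MemM k c →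
        dSum (symmDiagReduction k I) x c = dSum I x c) ∧
      ZeroAtDiag k (symmDiagReduction k I) ∧
      ((∀ a b, I b a = I a b) → ZeroAtDiag k I → symmDiagReduction k I = I) :=
  ⟨fun _ x _ hc => dSum_symmDiagReduction hk x hc, zeroAtDiag_symmDiagReduction hk,
    fun hsymm hI => hI.symmDiagReduction_eq hk hsymm⟩

end DiagonalReduction

theorem statement8 {n k : ℕ} (hk1 : 1 ≤ k) (hk2 : k ≤ n) (X : Fin n → Type*)
    (I : (∀ i, X i) → (∀ i, X i) → ℝ) (hsym : NSymm I) :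
    (∀ (m : ℕ) (x : ∀ i, Fin m → X i), (∀ i, Function.Injective (x i)) →
      ∀ c : (Fin n → Fin m) → ℝ, MemM k c →
        (-1 : ℝ) ^ k * dSum (stmt8Kernel k I) x c = (-1 : ℝ) ^ k * dSum I x c) ∧
      ZeroAtDiag k (stmt8Kernel k I) ∧
      (ZeroAtDiag k I → stmt8Kernel k I = I) := by
  obtain ⟨hdSum, hdiag, heq⟩ := statement8_general (by simpa using hk2) I
  exact ⟨fun m x _ c hc => congrArg _ (hdSum m x c hc), hdiag, heq hsym.swap⟩

end PDIPaper
end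
end

section
/- Let n ≥ k ≥ 0, let γ_i : X_i × X_i → [0,∞) (1 ≤ i ≤ n) be CND kernels, and let g : [0,∞)^n → ℝ be a continuous function that vanishes on ∂_{k−1}^n and whose restriction to (0,∞)^n is a Bernstein function of order k. Then the kernel 𝕴_g^γ(x_{1⃗}, x_{2⃗}) := g(γ_1(x_1^1, x_1^2), …, γ_n(x_n^1, x_n^2)) is PDI_k on 𝕏_n. -/
noncomputable section

open Finset

namespace PDIPaper

variable {ι : Type*} [Fintype ι] [DecidableEq ι] {X : ι → Type*}

/-- Partial derivative of a function of `n` real variables in coordinate `i`. -/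
def pderiv' {n : ℕ} (i : Fin n) (h : (Fin n → ℝ) → ℝ) : (Fin n → ℝ) → ℝ :=
  fun t => deriv (fun s : ℝ => h (Function.update t i s)) (t i)

/-- Iterated partial derivative in coordinate `i`. -/
def pderivPow {n : ℕ} (i : Fin n) : ℕ → ((Fin n → ℝ) → ℝ) → (Fin n → ℝ) → ℝ
  | 0 => fun h => h
  | j + 1 => fun h => pderiv' i (pderivPow i j h)

/-- Mixed partial derivative `∂^α h` for a multi-index `α`. -/
def pderivMulti {n : ℕ} (α : Fin n → ℕ) (h : (Fin n → ℝ) → ℝ) : (Fin n → ℝ) → ℝ :=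
  (List.finRange n).foldr (fun i acc => pderivPow i (α i) acc) h

/-- `h` is completely monotone with `n` variables: it is `C^∞` on `(0,∞)^n` and
`(-1)^{|α|} ∂^α h(t) ≥ 0` for every multi-index `α` and every `t ∈ (0,∞)^n`. -/
def CompletelyMonotoneN {n : ℕ} (h : (Fin n → ℝ) → ℝ) : Prop :=
  (∀ N : ℕ, ContDiffOn ℝ N h {t : Fin n → ℝ | ∀ i, 0 < t i}) ∧
    ∀ (α : Fin n → ℕ) (t : Fin n → ℝ), (∀ i, 0 < t i) →
      0 ≤ (-1 : ℝ) ^ (∑ i, α i) * pderivMulti α h t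

/-- `g` is a Bernstein function of order `k` on `(0,∞)^n`: it is `C^∞` there and for
every `F ⊆ {1,…,n}` with `|F| = k` the mixed partial `∂^{1_F} g` is completely
monotone with `n` variables. -/
def BernsteinOrder {n : ℕ} (k : ℕ) (g : (Fin n → ℝ) → ℝ) : Prop :=
  (∀ N : ℕ, ContDiffOn ℝ N g {t : Fin n → ℝ | ∀ i, 0 < t i}) ∧
    ∀ F : Finset (Fin n), F.card = k →
      CompletelyMonotoneN (pderivMulti (fun i => if i ∈ F then 1 else 0) g)

/-!
By the mean value theorem the mixed forward differences of `g` carry the signs of its derivatives.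
Hence on a lattice `t + h ℕ^n` the functional `L : X ^ p ↦ (-1) ^ k * g (t + h p)` is nonnegative on
every product of powers of the `X l` and `1 - X l` in which `1 - X l` occurs for at least `k`
indices `l`.

Suppose first that the kernels take values in `h ℕ`, say `γ l = h J l`. The double integral is
then `L P` for `P = ∑ c α c β X ^ J(α, β)`. By Schoenberg's theorem `x ^ J l` is positive
semidefinite for `x ∈ [0,1]`, so the Schur product theorem gives `P ≥ 0` on the unit cube, while
`μ ∈ ℳ_k` makes `P` vanish wherever fewer than `k` coordinates differ from `1`. These two
properties imply `L P ≥ 0`: because `P` vanishes on these flats, its degree-`N` Bernstein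
coefficients differ from its values at the nodes by at most `(C / N) e_k(1 - X)`, where `e_k` is
the elementary symmetric polynomial. So `P + (C / N) e_k(1 - X)` has nonnegative Bernstein
coefficients, and `N → ∞` gives the claim.

General kernels are approximated by such lattice valued ones. Rounding destroys conditional negative
definiteness, but adding a constant multiple of `h` off the diagonal restores it.
-/

open scoped ContDiff

section Orthant

variable {n : ℕ} {f : (Fin n → ℝ) → ℝ} {h s : ℝ} {t : Fin n → ℝ}

/-- The open orthant `(0,∞)^n`. -/
def openOrthant (n : ℕ) : Set (Fin n → ℝ) := {t | ∀ i, 0 < t i}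

lemma isOpen_openOrthant : IsOpen (openOrthant n) := by
  simpa [Set.pi, openOrthant] using
    isOpen_set_pi Set.finite_univ fun (_ : Fin n) _ => isOpen_Ioi (a := (0 : ℝ))

lemma add_single_mem_openOrthant (hh : 0 ≤ h) (i : Fin n) (ht : t ∈ openOrthant n) :
    t + Pi.single i h ∈ openOrthant n := by
  have hsingle : (0 : Fin n → ℝ) ≤ Pi.single i h := Pi.single_nonneg.2 hh
  exact fun j => add_pos_of_pos_of_nonneg (ht j) (hsingle j)

lemma pderiv'_eq_of_hasFDerivAt {f' : (Fin n → ℝ) →L[ℝ] ℝ} (hf : HasFDerivAt f f' t)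
    (i : Fin n) : pderiv' i f t = f' (Pi.single i 1) := by
  rw [← Function.update_eq_self i t] at hf
  exact (hf.comp_hasDerivAt (t i) (hasDerivAt_update t i (t i))).deriv

lemma pderiv'_update (i : Fin n) (f : (Fin n → ℝ) → ℝ) (t : Fin n → ℝ) (u : ℝ) :
    pderiv' i f (Function.update t i u) = deriv (fun v => f (Function.update t i v)) u := by
  simp only [pderiv', Function.update_idem, Function.update_self]

lemma differentiableAt_of_contDiffOn_openOrthant (hf : ContDiffOn ℝ ∞ f (openOrthant n))
    (ht : t ∈ openOrthant n) : DifferentiableAt ℝ f t :=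
  (hf.contDiffAt (isOpen_openOrthant.mem_nhds ht)).differentiableAt (by simp)

lemma contDiffOn_pderiv' (hf : ContDiffOn ℝ ∞ f (openOrthant n)) (i : Fin n) :
    ContDiffOn ℝ ∞ (pderiv' i f) (openOrthant n) :=
  ((hf.fderiv_of_isOpen isOpen_openOrthant (by simp)).clm_apply contDiffOn_const).congr
    fun _ ht => pderiv'_eq_of_hasFDerivAt
      (differentiableAt_of_contDiffOn_openOrthant hf ht).hasFDerivAt i

lemma contDiffOn_fwdDiff_single (hf : ContDiffOn ℝ ∞ f (openOrthant n)) (hh : 0 ≤ h)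
    (i : Fin n) : ContDiffOn ℝ ∞ (fwdDiff (Pi.single i h) f) (openOrthant n) :=
  (hf.comp (contDiffOn_id.add contDiffOn_const)
    fun _ ht => add_single_mem_openOrthant hh i ht).sub hf

lemma pderiv'_fwdDiff_single (hf : ContDiffOn ℝ ∞ f (openOrthant n)) (hh : 0 ≤ h)
    (i j : Fin n) (ht : t ∈ openOrthant n) :
    pderiv' j (fwdDiff (Pi.single i h) f) t = fwdDiff (Pi.single i h) (pderiv' j f) t := by
  have h₀ := (differentiableAt_of_contDiffOn_openOrthant hf ht).hasFDerivAt
  have h₁ := (differentiableAt_of_contDiffOn_openOrthant hf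
    (add_single_mem_openOrthant hh i ht)).hasFDerivAt
  have hshift := ((hasFDerivAt_comp_add_right (Pi.single i h)).2 h₁).sub h₀
  rw [fwdDiff, pderiv'_eq_of_hasFDerivAt h₀ j, pderiv'_eq_of_hasFDerivAt h₁ j]
  exact pderiv'_eq_of_hasFDerivAt hshift j

lemma mul_fwdDiff_single_nonneg (hf : ContDiffOn ℝ ∞ f (openOrthant n)) (hh : 0 ≤ h)
    (i : Fin n) (hpos : ∀ u ∈ openOrthant n, 0 ≤ s * pderiv' i f u)
    (ht : t ∈ openOrthant n) : 0 ≤ s * fwdDiff (Pi.single i h) f t := by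
  have hmem : ∀ u ∈ Set.Ici (t i), Function.update t i u ∈ openOrthant n := by
    intro u hu j
    rcases eq_or_ne j i with rfl | hj
    · simpa using (ht j).trans_le hu
    · simpa [hj] using ht j
  have hdiff : ∀ u ∈ Set.Ici (t i), DifferentiableAt ℝ (fun v => f (Function.update t i v)) u :=
    fun u hu => (differentiableAt_of_contDiffOn_openOrthant hf (hmem u hu)).comp u
      (hasDerivAt_update t i u).differentiableAt
  have hmono : MonotoneOn (fun u => s * f (Function.update t i u)) (Set.Ici (t i)) := by
    refine monotoneOn_of_deriv_nonneg (convex_Ici _)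
      (fun u hu => ((hdiff u hu).const_mul s).continuousAt.continuousWithinAt)
      (fun u hu => ((hdiff u (interior_subset hu)).const_mul s).differentiableWithinAt)
      fun u hu => ?_
    rw [deriv_const_mul_field, ← pderiv'_update]
    exact hpos _ (hmem u (interior_subset hu))
  have hle : t i ≤ t i + h := le_add_of_nonneg_right hh
  have hstep : Function.update t i (t i + h) = t + Pi.single i h := by
    ext j
    rcases eq_or_ne j i with rfl | hj <;> simp [*]
  have hends := hmono Set.self_mem_Ici hle hle
  simp only [Function.update_eq_self, hstep] at hends
  rw [fwdDiff, mul_sub]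
  exact sub_nonneg.2 hends

end Orthant

section MixedDifferences

variable {n : ℕ} {f : (Fin n → ℝ) → ℝ} {h s : ℝ} {t : Fin n → ℝ}

/-- The mixed partial derivative of `f` along a list of coordinate directions. Words in the
coordinates are more convenient than multi-indices because concatenation composes them. -/
def pderivAlong (w : List (Fin n)) (f : (Fin n → ℝ) → ℝ) : (Fin n → ℝ) → ℝ := w.foldr pderiv' f

/-- The mixed forward difference of `f` with step `h` along a list of coordinate directions. -/
def fwdDiffAlong (h : ℝ) (w : List (Fin n)) (f : (Fin n → ℝ) → ℝ) : (Fin n → ℝ) → ℝ :=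
  w.foldl (fun f i => fwdDiff (Pi.single i h) f) f

lemma pderivAlong_append (v w : List (Fin n)) (f : (Fin n → ℝ) → ℝ) :
    pderivAlong (v ++ w) f = pderivAlong v (pderivAlong w f) :=
  List.foldr_append

lemma fwdDiffAlong_append_singleton (w : List (Fin n)) (i : Fin n) :
    fwdDiffAlong h (w ++ [i]) f = fwdDiff (Pi.single i h) (fwdDiffAlong h w f) := by
  simp only [fwdDiffAlong, List.foldl_append, List.foldl_cons, List.foldl_nil]

lemma contDiffOn_fwdDiffAlong (hf : ContDiffOn ℝ ∞ f (openOrthant n)) (hh : 0 ≤ h)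
    (w : List (Fin n)) : ContDiffOn ℝ ∞ (fwdDiffAlong h w f) (openOrthant n) := by
  induction w generalizing f with
  | nil => exact hf
  | cons i _ ih => exact ih (contDiffOn_fwdDiff_single hf hh i)

lemma pderiv'_fwdDiffAlong (hf : ContDiffOn ℝ ∞ f (openOrthant n)) (hh : 0 ≤ h)
    (w : List (Fin n)) (j : Fin n) :
    Set.EqOn (pderiv' j (fwdDiffAlong h w f)) (fwdDiffAlong h w (pderiv' j f))
      (openOrthant n) := by
  induction w using List.reverseRecOn with
  | nil => exact fun _ _ => rfl
  | append_singleton w i ih =>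
    intro t ht
    rw [fwdDiffAlong_append_singleton, fwdDiffAlong_append_singleton,
      pderiv'_fwdDiff_single (contDiffOn_fwdDiffAlong hf hh w) hh i j ht, fwdDiff, fwdDiff,
      ih ht, ih (add_single_mem_openOrthant hh i ht)]

theorem mul_fwdDiffAlong_nonneg (hf : ContDiffOn ℝ ∞ f (openOrthant n)) (hh : 0 ≤ h)
    (w : List (Fin n)) (hpos : ∀ u ∈ openOrthant n, 0 ≤ s * pderivAlong w f u)
    (ht : t ∈ openOrthant n) : 0 ≤ s * fwdDiffAlong h w f t := by
  induction w using List.reverseRecOn generalizing f t with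
  | nil => exact hpos t ht
  | append_singleton w i ih =>
    rw [fwdDiffAlong_append_singleton]
    refine mul_fwdDiff_single_nonneg (contDiffOn_fwdDiffAlong hf hh w) hh i (fun u hu => ?_) ht
    rw [pderiv'_fwdDiffAlong hf hh w i hu]
    refine ih (contDiffOn_pderiv' hf i) (fun v hv => ?_) hu
    simpa only [pderivAlong_append] using! hpos v hv

/-- The word in which the letter `i` occurs `α i` times, the letters being in increasing order. -/
def multiIndexWord (α : Fin n → ℕ) : List (Fin n) :=
  (List.finRange n).flatMap fun i => List.replicate (α i) i

lemma prod_map_multiIndexWord {M : Type*} [CommMonoid M] (α : Fin n → ℕ) (u : Fin n → M) :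
    ((multiIndexWord α).map u).prod = ∏ i, u i ^ α i := by
  simp [multiIndexWord, List.flatMap, List.map_flatten, List.prod_flatten, Fin.prod_univ_def,
    Function.comp_def]

lemma pderivPow_eq_pderivAlong_replicate (i : Fin n) (j : ℕ) (f : (Fin n → ℝ) → ℝ) :
    pderivPow i j f = pderivAlong (List.replicate j i) f := by
  induction j with
  | zero => rfl
  | succ j ih => exact congrArg (pderiv' i) ih

lemma pderivMulti_eq_pderivAlong (α : Fin n → ℕ) (f : (Fin n → ℝ) → ℝ) :
    pderivMulti α f = pderivAlong (multiIndexWord α) f := by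
  simp only [pderivMulti, pderivAlong, multiIndexWord, List.foldr_flatMap,
    pderivPow_eq_pderivAlong_replicate]

end MixedDifferences

section MomentFunctional

variable {σ R : Type*} [CommSemiring R]

/-- The linear functional on polynomials with moments `v`, sending the monomial `X ^ p` to
`v p`. -/
def momentFunctional (v : (σ →₀ ℕ) → R) : MvPolynomial σ R →ₗ[R] R :=
  (MvPolynomial.basisMonomials σ R).constr R v

lemma momentFunctional_monomial (v : (σ →₀ ℕ) → R) (p : σ →₀ ℕ) (a : R) :
    momentFunctional v (MvPolynomial.monomial p a) = a * v p := by
  have hbasis : momentFunctional v (MvPolynomial.monomial p 1) = v p := by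
    simpa only [momentFunctional, MvPolynomial.coe_basisMonomials] using
      (MvPolynomial.basisMonomials σ R).constr_basis R v p
  rw [← hbasis, ← smul_eq_mul, ← map_smul, MvPolynomial.smul_monomial, smul_eq_mul, mul_one]

lemma momentFunctional_eq_sum (v : (σ →₀ ℕ) → R) (P : MvPolynomial σ R) :
    momentFunctional v P = ∑ p ∈ P.support, P.coeff p * v p := by
  conv_lhs => rw [P.as_sum]
  simp only [map_sum, momentFunctional_monomial]

/-- A functional is Hausdorff positive of order `k` if it is nonnegative on the products
`X ^ p * (1 - X) ^ α` in which at least `k` of the factors `1 - X l` occur. For `k = 0` this is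
Hausdorff's condition characterising the moment functionals of positive measures on the unit
cube. -/
def HausdorffPositive [Fintype σ] (k : ℕ) (L : MvPolynomial σ ℝ →ₗ[ℝ] ℝ) : Prop :=
  ∀ (p : σ →₀ ℕ) (α : σ → ℕ), k ≤ #{l | α l ≠ 0} →
    0 ≤ L (MvPolynomial.monomial p 1 * ∏ l, (1 - MvPolynomial.X l) ^ α l)

end MomentFunctional

section LatticeFunctional

variable {n k : ℕ} {g : (Fin n → ℝ) → ℝ} {h : ℝ} {t : Fin n → ℝ}

/-- The functional whose moments are the values of `f` on the lattice with base point `t` and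
mesh `h`. Multiplication by `X i - 1` corresponds to the forward difference of `f` in
coordinate `i`. -/
def latticeFunctional (h : ℝ) (t : Fin n → ℝ) (f : (Fin n → ℝ) → ℝ) :
    MvPolynomial (Fin n) ℝ →ₗ[ℝ] ℝ :=
  momentFunctional fun p => f fun l => t l + p l * h

lemma latticeFunctional_X_sub_one_mul (f : (Fin n → ℝ) → ℝ) (i : Fin n)
    (P : MvPolynomial (Fin n) ℝ) :
    latticeFunctional h t f ((MvPolynomial.X i - 1) * P) =
      latticeFunctional h t (fwdDiff (Pi.single i h) f) P := by
  induction P using MvPolynomial.induction_on' with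
  | monomial p a =>
    have hstep : (fun l => t l + ((Finsupp.single i 1 + p : Fin n →₀ ℕ) l) * h) =
        (fun l => t l + p l * h) + Pi.single i h := by
      ext l
      rcases eq_or_ne l i with rfl | hl
      · simp only [Finsupp.add_apply, Finsupp.single_eq_same, Pi.add_apply, Pi.single_eq_same]
        push_cast
        ring
      · simp [hl]
    rw [sub_mul, one_mul, MvPolynomial.X, MvPolynomial.monomial_mul, one_mul]
    simp only [latticeFunctional, map_sub, momentFunctional_monomial, fwdDiff, hstep, mul_sub]
  | add P Q hP hQ => rw [mul_add, map_add, map_add, hP, hQ]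

lemma latticeFunctional_prod_X_sub_one_mul (w : List (Fin n)) (f : (Fin n → ℝ) → ℝ)
    (P : MvPolynomial (Fin n) ℝ) :
    latticeFunctional h t f ((w.map fun i => MvPolynomial.X i - 1).prod * P) =
      latticeFunctional h t (fwdDiffAlong h w f) P := by
  induction w generalizing f with
  | nil => rw [List.map_nil, List.prod_nil, one_mul]; rfl
  | cons i w ih =>
    rw [List.map_cons, List.prod_cons, mul_assoc, latticeFunctional_X_sub_one_mul, ih]
    rfl

lemma BernsteinOrder.contDiffOn (hg : BernsteinOrder k g) : ContDiffOn ℝ ∞ g (openOrthant n) :=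
  contDiffOn_infty.2 hg.1

lemma BernsteinOrder.fwdDiffAlong_nonneg (hg : BernsteinOrder k g) (hh : 0 ≤ h)
    {F : Finset (Fin n)} (hF : #F = k) (β : Fin n → ℕ) (ht : t ∈ openOrthant n) :
    0 ≤ (-1) ^ (∑ l, β l) *
      fwdDiffAlong h (multiIndexWord β ++ multiIndexWord fun l => if l ∈ F then 1 else 0) g t :=
  mul_fwdDiffAlong_nonneg hg.contDiffOn hh _ (fun u hu => by
    rw [pderivAlong_append, ← pderivMulti_eq_pderivAlong, ← pderivMulti_eq_pderivAlong]
    exact (hg.2 F hF).2 β u hu) ht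

lemma prod_one_sub_X_pow_add_indicator (F : Finset (Fin n)) (β : Fin n → ℕ) :
    ∏ l, (1 - MvPolynomial.X l : MvPolynomial (Fin n) ℝ) ^ (β l + if l ∈ F then 1 else 0) =
      ((-1 : ℝ) ^ (∑ l, β l + #F)) •
        ((multiIndexWord β ++ multiIndexWord fun l => if l ∈ F then 1 else 0).map
          fun l => MvPolynomial.X l - 1).prod := by
  have hneg : ∀ l, (1 - MvPolynomial.X l : MvPolynomial (Fin n) ℝ) =
      (-1) * (MvPolynomial.X l - 1) := fun l => by ring
  simp_rw [List.map_append, List.prod_append, prod_map_multiIndexWord, ← prod_mul_distrib,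
    ← pow_add, hneg, mul_pow, prod_mul_distrib, prod_pow_eq_pow_sum, sum_add_distrib]
  simp [MvPolynomial.smul_eq_C_mul]

theorem BernsteinOrder.hausdorffPositive_latticeFunctional (hg : BernsteinOrder k g)
    (hh : 0 ≤ h) (ht : t ∈ openOrthant n) :
    HausdorffPositive k ((-1 : ℝ) ^ k • latticeFunctional h t g) := by
  intro p α hα
  obtain ⟨F, hFα, hF⟩ := exists_subset_card_eq hα
  set β : Fin n → ℕ := fun l => α l - if l ∈ F then 1 else 0
  have hsplit : ∀ l, α l = β l + if l ∈ F then 1 else 0 := by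
    intro l
    have : l ∈ F → α l ≠ 0 := fun hl => (mem_filter.1 (hFα hl)).2
    grind
  have hmem : (fun l => t l + p l * h) ∈ openOrthant n := fun l =>
    add_pos_of_pos_of_nonneg (ht l) (by positivity)
  simp_rw [hsplit, prod_one_sub_X_pow_add_indicator, hF, mul_comm (MvPolynomial.monomial p _),
    smul_mul_assoc, LinearMap.smul_apply, map_smul, latticeFunctional_prod_X_sub_one_mul,
    latticeFunctional, momentFunctional_monomial, one_mul, smul_eq_mul, ← mul_assoc,
    ← pow_add, show k + (∑ l, β l + k) = ∑ l, β l + 2 * k by ring, pow_add _ _ (2 * k),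
    (even_two_mul k).neg_one_pow, mul_one]
  exact hg.fwdDiffAlong_nonneg hh hF β hmem

end LatticeFunctional

section BernsteinCoefficient

variable {N i j : ℕ}

/-- The `i`-th coefficient of `X ^ j` in the Bernstein basis of degree `N`. It approximates
`(i / N) ^ j`, the value of `X ^ j` at the `i`-th node. -/
def chooseRatio (N j i : ℕ) : ℝ := i.choose j / N.choose j

lemma chooseRatio_zero : chooseRatio N 0 i = 1 := by simp [chooseRatio]

lemma chooseRatio_one : chooseRatio N 1 i = i / N := by simp [chooseRatio]

lemma chooseRatio_self (hj : j ≤ N) : chooseRatio N j N = 1 :=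
  div_self (by exact_mod_cast (Nat.choose_pos hj).ne')

lemma chooseRatio_nonneg : 0 ≤ chooseRatio N j i := by unfold chooseRatio; positivity

lemma chooseRatio_le_one (hi : i ≤ N) : chooseRatio N j i ≤ 1 :=
  div_le_one_of_le₀ (by exact_mod_cast Nat.choose_le_choose j hi) (by positivity)

lemma chooseRatio_mul_choose (hj : j ≤ N) (r : ℕ) :
    chooseRatio N j (j + r) * N.choose (j + r) = (N - j).choose r := by
  have hpos : (0 : ℝ) < N.choose j := by exact_mod_cast Nat.choose_pos hj
  have hchoose := Nat.choose_mul (n := N) (Nat.le_add_right j r)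
  rw [Nat.add_sub_cancel_left] at hchoose
  rw [chooseRatio, div_mul_eq_mul_div, div_eq_iff hpos.ne', mul_comm,
    mul_comm ((N - j).choose r : ℝ)]
  exact_mod_cast hchoose

lemma X_pow_eq_sum_bernsteinPolynomial (hj : j ≤ N) :
    (Polynomial.X : Polynomial ℝ) ^ j =
      ∑ i ∈ range (N + 1), chooseRatio N j i • bernsteinPolynomial ℝ N i := by
  have hlow : ∑ i ∈ range j, chooseRatio N j i • bernsteinPolynomial ℝ N i = 0 :=
    sum_eq_zero fun i hi => by simp [chooseRatio, Nat.choose_eq_zero_of_lt (mem_range.1 hi)]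
  have hbinom : (Polynomial.X : Polynomial ℝ) ^ j =
      Polynomial.X ^ j * (Polynomial.X + (1 - Polynomial.X)) ^ (N - j) := by simp
  rw [show N + 1 = j + (N - j + 1) by lia, sum_range_add, hlow, zero_add, hbinom, add_pow, mul_sum]
  refine sum_congr rfl fun r _ => ?_
  rw [bernsteinPolynomial, mul_assoc (N.choose (j + r) : Polynomial ℝ), ← nsmul_eq_mul,
    ← Nat.cast_smul_eq_nsmul ℝ, smul_smul, chooseRatio_mul_choose hj, Nat.cast_smul_eq_nsmul,
    nsmul_eq_mul, pow_add, Nat.sub_sub]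
  ring

lemma chooseRatio_succ :
    chooseRatio N (j + 1) i = chooseRatio N j i * ((i - j) / (N - j)) := by
  have hrec (a : ℕ) : (a.choose (j + 1) : ℝ) = a.choose j * (a - j) / (j + 1) := by
    rw [eq_div_iff (by positivity)]
    rcases le_or_gt j a with h | h
    · rw [← Nat.cast_sub h]
      exact_mod_cast Nat.choose_succ_right_eq a j
    · simp [Nat.choose_eq_zero_of_lt h, Nat.choose_eq_zero_of_lt (Nat.lt_succ_of_lt h)]
  rw [chooseRatio, hrec, hrec, div_div_div_cancel_right₀ (by positivity), mul_div_mul_comm]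
  rfl

lemma abs_chooseRatio_sub_pow_le (hi : i ≤ N) (hj : 2 * j ≤ N) :
    |chooseRatio N j i - (i / N) ^ j| ≤ j ^ 2 / N * (1 - i / N) := by
  induction j with
  | zero => simp [chooseRatio_zero]
  | succ j ih =>
    have hjN : (2 * j : ℝ) + 2 ≤ N := by exact_mod_cast hj
    have hj0 : (0 : ℝ) ≤ j := j.cast_nonneg
    have hNj : (0 : ℝ) < N - j := by linarith [hj0]
    have hN : (0 : ℝ) < N := by linarith
    have hx0 : (0 : ℝ) ≤ i / N := by positivity
    have hx1 : (i / N : ℝ) ≤ 1 := div_le_one_of_le₀ (by exact_mod_cast hi) hN.le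
    rw [chooseRatio_succ]
    have hratio : ((i : ℝ) - j) / (N - j) = i / N - j / (N - j) * (1 - i / N) := by
      field_simp
      ring
    have hdecay : (j : ℝ) / (N - j) ≤ 2 * j / N := by
      rw [div_le_div_iff₀ hNj hN]
      nlinarith
    have hdefect : 0 ≤ (j : ℝ) / (N - j) * (1 - i / N) :=
      mul_nonneg (by positivity) (sub_nonneg.2 hx1)
    calc |chooseRatio N j i * ((i - j) / (N - j)) - (i / N) ^ (j + 1)|
        = |(chooseRatio N j i - (i / N) ^ j) * (i / N) -
            chooseRatio N j i * (j / (N - j) * (1 - i / N))| := by rw [hratio]; ring_nf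
      _ ≤ |(chooseRatio N j i - (i / N) ^ j) * (i / N)| +
            |chooseRatio N j i * (j / (N - j) * (1 - i / N))| := abs_sub _ _
      _ ≤ |chooseRatio N j i - (i / N) ^ j| + j / (N - j) * (1 - i / N) := by
        rw [abs_mul, abs_of_nonneg hx0, abs_of_nonneg (mul_nonneg chooseRatio_nonneg hdefect)]
        exact add_le_add (mul_le_of_le_one_right (abs_nonneg _) hx1)
          (mul_le_of_le_one_left hdefect (chooseRatio_le_one hi))
      _ ≤ j ^ 2 / N * (1 - i / N) + 2 * j / N * (1 - i / N) :=
        add_le_add (ih (by lia)) (mul_le_mul_of_nonneg_right hdecay (sub_nonneg.2 hx1))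
      _ = (j ^ 2 + 2 * j) / N * (1 - i / N) := by ring
      _ ≤ (j + 1 : ℕ) ^ 2 / N * (1 - i / N) := by
        gcongr
        push_cast
        linarith

lemma one_sub_pow_le {x : ℝ} (hx : 0 ≤ x) (j : ℕ) : 1 - x ^ j ≤ j * (1 - x) := by
  linarith [one_add_mul_sub_le_pow (by linarith : -1 ≤ x) j]

lemma abs_one_sub_pow_le {x : ℝ} {d : ℕ} (hx0 : 0 ≤ x) (hx1 : x ≤ 1) (hj : j ≤ d) :
    |1 - x ^ j| ≤ (d + 1) ^ 2 * (1 - x) := by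
  have hjd : (j : ℝ) ≤ d := by exact_mod_cast hj
  rw [abs_of_nonneg (sub_nonneg.2 (pow_le_one₀ hx0 hx1))]
  refine (one_sub_pow_le hx0 j).trans (mul_le_mul_of_nonneg_right ?_ (sub_nonneg.2 hx1))
  nlinarith

lemma abs_chooseRatio_sub_pow_le_of_le {d : ℕ} (hi : i ≤ N) (hj : j ≤ d) (hd : 2 * d < N) :
    |chooseRatio N j i - (i / N) ^ j| ≤ 1 / N * ((d + 1) ^ 2 * (1 - i / N)) := by
  have hjd : (j : ℝ) ≤ d + 1 := by exact_mod_cast hj.trans d.le_succ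
  have hx : (0 : ℝ) ≤ 1 - i / N :=
    sub_nonneg.2 (div_le_one_of_le₀ (by exact_mod_cast hi) (by positivity))
  refine (abs_chooseRatio_sub_pow_le hi (by lia)).trans ?_
  rw [← mul_assoc, one_div_mul_eq_div]
  gcongr

lemma abs_one_sub_chooseRatio_le {d : ℕ} (hi : i ≤ N) (hj : j ≤ d) (hd : 2 * d < N) :
    |1 - chooseRatio N j i| ≤ (d + 1) ^ 2 * (1 - i / N) := by
  have hjd : (j : ℝ) ≤ d := by exact_mod_cast hj
  have hN : (1 : ℝ) ≤ N := by exact_mod_cast (Nat.zero_le _).trans_lt hd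
  have hx : (0 : ℝ) ≤ 1 - i / N :=
    sub_nonneg.2 (div_le_one_of_le₀ (by exact_mod_cast hi) (by positivity))
  have hclose := abs_le.1 (abs_chooseRatio_sub_pow_le hi (by lia : 2 * j ≤ N))
  rw [abs_of_nonneg (sub_nonneg.2 (chooseRatio_le_one hi))]
  calc 1 - chooseRatio N j i
      ≤ j * (1 - i / N) + j ^ 2 / N * (1 - i / N) := by
        linarith [hclose.1, one_sub_pow_le (by positivity : (0 : ℝ) ≤ i / N) j]
    _ ≤ d * (1 - i / N) + d ^ 2 * (1 - i / N) := by
        gcongr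
        exact (div_le_self (sq_nonneg _) hN).trans (by gcongr)
    _ ≤ (d + 1) ^ 2 * (1 - i / N) := by
        rw [← add_mul]
        gcongr
        linarith

end BernsteinCoefficient

section ProductFunctional

variable {σ R : Type*} [Fintype σ] [CommSemiring R]

/-- The functional sending `X ^ p` to `∏ l, φ l (p l)`: the tensor product of the univariate
functionals with moment sequences `φ l`. -/
def productFunctional (φ : σ → ℕ → R) : MvPolynomial σ R →ₗ[R] R :=
  momentFunctional fun p => ∏ l, φ l (p l)

lemma productFunctional_monomial (φ : σ → ℕ → R) (p : σ →₀ ℕ) (a : R) :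
    productFunctional φ (MvPolynomial.monomial p a) = a * ∏ l, φ l (p l) :=
  momentFunctional_monomial _ p a

lemma productFunctional_eq_sum (φ : σ → ℕ → R) (P : MvPolynomial σ R) :
    productFunctional φ P = ∑ p ∈ P.support, P.coeff p * ∏ l, φ l (p l) :=
  momentFunctional_eq_sum _ P

lemma productFunctional_pow (x : σ → R) (P : MvPolynomial σ R) :
    productFunctional (fun l j => x l ^ j) P = MvPolynomial.eval x P := by
  rw [productFunctional_eq_sum, MvPolynomial.eval_eq']

end ProductFunctional

section BernsteinExpansion

variable {σ : Type*} [Fintype σ] {N : ℕ} {P : MvPolynomial σ ℝ}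

/-- The tensor product Bernstein polynomial of degree `N` in each variable, with index `i`. -/
def bernsteinProduct (N : ℕ) (i : σ → ℕ) : MvPolynomial σ ℝ :=
  ∏ l, Polynomial.aeval (MvPolynomial.X l) (bernsteinPolynomial ℝ N (i l))

/-- The functional giving the coefficient of `bernsteinProduct N i` in the Bernstein expansion
of a polynomial of degree at most `N` in each variable. -/
def bernsteinCoeff (N : ℕ) (i : σ → ℕ) : MvPolynomial σ ℝ →ₗ[ℝ] ℝ :=
  productFunctional fun l j => chooseRatio N j (i l)

lemma bernsteinProduct_eq (N : ℕ) (i : σ → ℕ) :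
    bernsteinProduct N i = (∏ l, (N.choose (i l) : ℝ)) •
      (MvPolynomial.monomial (Finsupp.equivFunOnFinite.symm i) 1 *
        ∏ l, (1 - MvPolynomial.X l) ^ (N - i l)) := by
  simp [bernsteinProduct, bernsteinPolynomial, prod_mul_distrib, MvPolynomial.smul_eq_C_mul,
    MvPolynomial.monomial_eq, Finsupp.prod_fintype, mul_assoc]

variable [DecidableEq σ]

lemma eq_sum_bernsteinCoeff_smul (hP : ∀ l, P.degreeOf l ≤ N) :
    P = ∑ i ∈ Fintype.piFinset fun _ : σ => range (N + 1),
      bernsteinCoeff N i P • bernsteinProduct N i := by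
  have hmonomial : ∀ p ∈ P.support, MvPolynomial.monomial p (1 : ℝ) =
      ∑ i ∈ Fintype.piFinset fun _ : σ => range (N + 1),
        (∏ l, chooseRatio N (p l) (i l)) • bernsteinProduct N i := by
    intro p hp
    have hpow (l : σ) : (MvPolynomial.X l : MvPolynomial σ ℝ) ^ p l =
        ∑ i ∈ range (N + 1), chooseRatio N (p l) i •
          Polynomial.aeval (MvPolynomial.X l) (bernsteinPolynomial ℝ N i) := by
      simpa using congrArg (Polynomial.aeval (MvPolynomial.X l : MvPolynomial σ ℝ))
        (X_pow_eq_sum_bernsteinPolynomial ((MvPolynomial.degreeOf_le_iff.1 (hP l)) p hp))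
    rw [MvPolynomial.monomial_eq, map_one, one_mul, Finsupp.prod_fintype _ _ fun _ => pow_zero _,
      prod_congr rfl fun l _ => hpow l, prod_univ_sum]
    exact sum_congr rfl fun i _ => prod_smul _ _ _
  conv_lhs => rw [P.as_sum]
  simp_rw [bernsteinCoeff, productFunctional_eq_sum, sum_smul]
  rw [sum_comm]
  refine sum_congr rfl fun p hp => ?_
  rw [← mul_one (P.coeff p), ← smul_eq_mul, ← MvPolynomial.smul_monomial, hmonomial p hp, smul_sum]
  simp only [smul_eq_mul, mul_one, mul_smul]

end BernsteinExpansion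

section MultiAffine

variable {σ : Type*} [Fintype σ] {P : MvPolynomial σ ℝ}

lemma bernsteinCoeff_eq_eval_of_degreeOf_le_one (hP : ∀ l, P.degreeOf l ≤ 1) (N : ℕ)
    (i : σ → ℕ) : bernsteinCoeff N i P = MvPolynomial.eval (fun l => (i l / N : ℝ)) P := by
  rw [bernsteinCoeff, productFunctional_eq_sum, MvPolynomial.eval_eq']
  refine sum_congr rfl fun p hp => congrArg _ (prod_congr rfl fun l _ => ?_)
  have hpl : p l ≤ 1 := (MvPolynomial.degreeOf_le_iff.1 (hP l)) p hp
  interval_cases p l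
  · rw [chooseRatio_zero, pow_zero]
  · rw [chooseRatio_one, pow_one]

end MultiAffine

section VanishesOnFlats

variable {σ : Type*} {k : ℕ} {P : MvPolynomial σ ℝ}

/-- The polynomial `P` vanishes at every point having fewer than `k` coordinates different
from `1`. -/
def VanishesOnFlats (k : ℕ) (P : MvPolynomial σ ℝ) : Prop :=
  ∀ (G : Finset σ) (x : σ → ℝ), #G < k → (∀ l ∉ G, x l = 1) → MvPolynomial.eval x P = 0

lemma VanishesOnFlats.add {Q : MvPolynomial σ ℝ} (hP : VanishesOnFlats k P)
    (hQ : VanishesOnFlats k Q) : VanishesOnFlats k (P + Q) := fun G x hG hx => by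
  rw [map_add, hP G x hG hx, hQ G x hG hx, add_zero]

lemma VanishesOnFlats.smul (hP : VanishesOnFlats k P) (a : ℝ) : VanishesOnFlats k (a • P) :=
  fun G x hG hx => by rw [MvPolynomial.smul_eval, hP G x hG hx, mul_zero]

variable [Fintype σ]

lemma productFunctional_bind₁_ite [DecidableEq σ] {G : Finset σ} {φ : σ → ℕ → ℝ}
    (hφ : ∀ l ∉ G, ∀ j, φ l j = 1) (P : MvPolynomial σ ℝ) :
    productFunctional φ (MvPolynomial.bind₁ (fun l => if l ∈ G then MvPolynomial.X l else 1) P) =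
      productFunctional φ P := by
  induction P using MvPolynomial.induction_on' with
  | monomial p a =>
    set q : σ →₀ ℕ := Finsupp.equivFunOnFinite.symm fun l => if l ∈ G then p l else 0
    have hsubst : MvPolynomial.bind₁ (fun l => if l ∈ G then MvPolynomial.X l else 1)
        (MvPolynomial.monomial p a) = MvPolynomial.monomial q a := by
      rw [MvPolynomial.bind₁, MvPolynomial.aeval_monomial, MvPolynomial.monomial_eq,
        Finsupp.prod_fintype _ _ fun _ => pow_zero _,
        Finsupp.prod_fintype _ _ fun _ => pow_zero _]
      refine congrArg _ (prod_congr rfl fun l _ => ?_)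
      by_cases hl : l ∈ G <;> simp [q, hl]
    rw [hsubst, productFunctional_monomial, productFunctional_monomial]
    refine congrArg _ (prod_congr rfl fun l _ => ?_)
    by_cases hl : l ∈ G <;> simp [q, hl, hφ]
  | add P Q hP hQ => rw [map_add, map_add, hP, hQ, map_add]

lemma VanishesOnFlats.productFunctional_eq_zero (hP : VanishesOnFlats k P) {G : Finset σ}
    (hG : #G < k) {φ : σ → ℕ → ℝ} (hφ : ∀ l ∉ G, ∀ j, φ l j = 1) : productFunctional φ P = 0 := by
  classical
  have hsubst :
      MvPolynomial.bind₁ (fun l => if l ∈ G then MvPolynomial.X l else 1) P =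
        (0 : MvPolynomial σ ℝ) := by
    refine MvPolynomial.funext fun x => ?_
    rw [map_zero]
    exact (MvPolynomial.eval₂Hom_bind₁ _ _ _ _).trans
      (hP G _ hG fun l hl => by rw [if_neg hl, map_one])
  rw [← productFunctional_bind₁_ite hφ, hsubst, map_zero]

lemma VanishesOnFlats.bernsteinCoeff_eq_zero (hP : VanishesOnFlats k P) {N : ℕ}
    (hN : ∀ l, P.degreeOf l ≤ N) {i : σ → ℕ} (hi : #{l | i l ≠ N} < k) :
    bernsteinCoeff N i P = 0 := by
  have hends : bernsteinCoeff N i P =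
      productFunctional (fun l j => if i l = N then 1 else chooseRatio N j (i l)) P := by
    rw [bernsteinCoeff, productFunctional_eq_sum, productFunctional_eq_sum]
    refine sum_congr rfl fun p hp => congrArg _ (prod_congr rfl fun l _ => ?_)
    split_ifs with hl
    · rw [hl, chooseRatio_self ((MvPolynomial.degreeOf_le_iff.1 (hN l)) p hp)]
    · rfl
  rw [hends]
  exact hP.productFunctional_eq_zero hi fun l hl j => if_pos (by simpa using hl)

theorem HausdorffPositive.nonneg_of_bernsteinCoeff_nonneg {L : MvPolynomial σ ℝ →ₗ[ℝ] ℝ}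
    (hL : HausdorffPositive k L) (hP : VanishesOnFlats k P) {N : ℕ}
    (hN : ∀ l, P.degreeOf l ≤ N)
    (hcoeff : ∀ i : σ → ℕ, (∀ l, i l ≤ N) → 0 ≤ bernsteinCoeff N i P) : 0 ≤ L P := by
  classical
  rw [eq_sum_bernsteinCoeff_smul hN, map_sum]
  refine sum_nonneg fun i hi => ?_
  have hiN : ∀ l, i l ≤ N := fun l =>
    Nat.lt_succ_iff.1 (mem_range.1 (Fintype.mem_piFinset.1 hi l))
  rw [map_smul, smul_eq_mul]
  rcases lt_or_ge #{l | i l ≠ N} k with hlt | hge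
  · rw [hP.bernsteinCoeff_eq_zero hN hlt, zero_mul]
  · refine mul_nonneg (hcoeff i hiN) ?_
    rw [bernsteinProduct_eq, map_smul, smul_eq_mul]
    refine mul_nonneg (by positivity) (hL _ _ (hge.trans (card_le_card fun l hl => ?_)))
    simp only [mem_filter, mem_univ, true_and] at hl ⊢
    have := hiN l
    lia

end VanishesOnFlats

section ElementarySymmetric

variable (σ : Type*) [Fintype σ] (k : ℕ)

/-- The `k`-th elementary symmetric polynomial in the `1 - X l`. On the unit cube it measures the
distance to the set of points with fewer than `k` coordinates different from `1`. -/
def esymmOneSub : MvPolynomial σ ℝ :=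
  ∑ F ∈ powersetCard k univ, ∏ l ∈ F, (1 - MvPolynomial.X l)

variable {σ k}

lemma eval_esymmOneSub (x : σ → ℝ) :
    MvPolynomial.eval x (esymmOneSub σ k) = ∑ F ∈ powersetCard k univ, ∏ l ∈ F, (1 - x l) := by
  simp [esymmOneSub, map_sum, map_prod]

lemma vanishesOnFlats_esymmOneSub : VanishesOnFlats k (esymmOneSub σ k) := by
  intro G x hG hx
  rw [eval_esymmOneSub]
  refine sum_eq_zero fun F hF => ?_
  obtain ⟨l, hlF, hlG⟩ := exists_mem_notMem_of_card_lt_card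
    (hG.trans_eq (mem_powersetCard.1 hF).2.symm)
  exact prod_eq_zero hlF (by rw [hx l hlG, sub_self])

lemma degreeOf_esymmOneSub_le_one (l : σ) : (esymmOneSub σ k).degreeOf l ≤ 1 := by
  classical
  have hfactor (j : σ) : (1 - MvPolynomial.X j : MvPolynomial σ ℝ).degreeOf l ≤
      if l = j then 1 else 0 := by
    refine (MvPolynomial.degreeOf_sub_le _ _ _).trans (max_le ?_ ?_)
    · simp [MvPolynomial.degreeOf_one]
    · rw [MvPolynomial.degreeOf_X]
  refine (MvPolynomial.degreeOf_sum_le _ _ _).trans (Finset.sup_le fun F _ => ?_)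
  refine (MvPolynomial.degreeOf_prod_le _ _ _).trans ((sum_le_sum fun j _ => hfactor j).trans ?_)
  rw [sum_ite_eq]
  split_ifs <;> simp

lemma eval_esymmOneSub_nonneg {x : σ → ℝ} (hx : ∀ l, x l ≤ 1) :
    0 ≤ MvPolynomial.eval x (esymmOneSub σ k) := by
  rw [eval_esymmOneSub]
  exact sum_nonneg fun F _ => prod_nonneg fun l _ => sub_nonneg.2 (hx l)

lemma prod_one_sub_le_eval_esymmOneSub {x : σ → ℝ} (hx0 : ∀ l, 0 ≤ x l) (hx1 : ∀ l, x l ≤ 1)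
    {G : Finset σ} (hG : k ≤ #G) :
    ∏ l ∈ G, (1 - x l) ≤ MvPolynomial.eval x (esymmOneSub σ k) := by
  obtain ⟨F, hFG, hF⟩ := exists_subset_card_eq hG
  rw [eval_esymmOneSub]
  calc ∏ l ∈ G, (1 - x l)
      ≤ ∏ l ∈ F, (1 - x l) := prod_le_prod_of_subset_of_le_one hFG
        (fun l _ => sub_nonneg.2 (hx1 l)) fun l _ _ => sub_le_self _ (hx0 l)
    _ ≤ _ := single_le_sum (f := fun F => ∏ l ∈ F, (1 - x l))
        (fun F _ => prod_nonneg fun l _ => sub_nonneg.2 (hx1 l))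
        (mem_powersetCard.2 ⟨subset_univ _, hF⟩)

end ElementarySymmetric

section Perturbation

variable {σ : Type*} {k : ℕ} {P : MvPolynomial σ ℝ} {ε : ℝ}

lemma abs_prod_sub_prod_le {u v w : σ → ℝ} (G : Finset σ) (hε : 0 ≤ ε)
    (hu : ∀ l, |u l| ≤ w l) (hv : ∀ l, |v l| ≤ w l) (huv : ∀ l, |u l - v l| ≤ ε * w l) :
    |∏ l ∈ G, u l - ∏ l ∈ G, v l| ≤ #G * ε * ∏ l ∈ G, w l := by
  classical
  have hw (l : σ) : 0 ≤ w l := (abs_nonneg _).trans (hu l)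
  induction G using Finset.induction_on with
  | empty => simp
  | insert a G ha ih =>
    have hprod : |∏ l ∈ G, v l| ≤ ∏ l ∈ G, w l :=
      (abs_prod _ _).trans_le (prod_le_prod (fun _ _ => abs_nonneg _) fun l _ => hv l)
    rw [prod_insert ha, prod_insert ha, prod_insert ha, card_insert_of_notMem ha]
    calc |u a * ∏ l ∈ G, u l - v a * ∏ l ∈ G, v l|
        = |u a * (∏ l ∈ G, u l - ∏ l ∈ G, v l) + (u a - v a) * ∏ l ∈ G, v l| := by ring_nf
      _ ≤ |u a| * |∏ l ∈ G, u l - ∏ l ∈ G, v l| + |u a - v a| * |∏ l ∈ G, v l| := by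
        rw [← abs_mul, ← abs_mul]
        exact abs_add_le _ _
      _ ≤ w a * (#G * ε * ∏ l ∈ G, w l) + ε * w a * ∏ l ∈ G, w l :=
        add_le_add (mul_le_mul (hu a) ih (abs_nonneg _) (hw a))
          (mul_le_mul (huv a) hprod (abs_nonneg _) (mul_nonneg hε (hw a)))
      _ = (#G + 1 : ℕ) * ε * (w a * ∏ l ∈ G, w l) := by
        push_cast
        ring

lemma VanishesOnFlats.sum_coeff_mul_prod_eq_zero [Finite σ] (hP : VanishesOnFlats k P)
    {G : Finset σ} (hG : #G < k) (φ : σ → ℕ → ℝ) :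
    ∑ p ∈ P.support, P.coeff p * ∏ l ∈ G, φ l (p l) = 0 := by
  classical
  cases nonempty_fintype σ
  have hzero := hP.productFunctional_eq_zero hG (φ := fun l j => if l ∈ G then φ l j else 1)
    fun l hl j => if_neg hl
  simpa only [productFunctional_eq_sum, prod_ite_mem, univ_inter] using hzero

variable [Fintype σ] {φ ψ : σ → ℕ → ℝ} {w : σ → ℝ}

lemma prod_eq_sum_prod_one_sub (u : σ → ℝ) :
    ∏ l, u l = ∑ G : Finset σ, (-1) ^ #G * ∏ l ∈ G, (1 - u l) := by
  have hneg : ∏ l, u l = ∏ l, (-(1 - u l) + 1) := prod_congr rfl fun l _ => by ring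
  rw [hneg, prod_add_one, powerset_univ]
  exact sum_congr rfl fun G _ => prod_neg _

lemma productFunctional_eq_sum_prod_one_sub (φ : σ → ℕ → ℝ) (P : MvPolynomial σ ℝ) :
    productFunctional φ P =
      ∑ G : Finset σ, (-1) ^ #G * ∑ p ∈ P.support, P.coeff p * ∏ l ∈ G, (1 - φ l (p l)) := by
  simp_rw [productFunctional_eq_sum, prod_eq_sum_prod_one_sub fun l => φ l _, mul_sum]
  rw [sum_comm]
  exact sum_congr rfl fun G _ => sum_congr rfl fun p _ => mul_left_comm _ _ _

/- In the expansion of both functionals by `productFunctional_eq_sum_prod_one_sub` the terms with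
`#G < k` vanish, so every remaining error term carries at least `k` of the weights `w l`. -/
theorem VanishesOnFlats.abs_productFunctional_sub_le (hP : VanishesOnFlats k P) (hε : 0 ≤ ε)
    (hφ : ∀ p ∈ P.support, ∀ l, |1 - φ l (p l)| ≤ w l)
    (hψ : ∀ p ∈ P.support, ∀ l, |1 - ψ l (p l)| ≤ w l)
    (hφψ : ∀ p ∈ P.support, ∀ l, |φ l (p l) - ψ l (p l)| ≤ ε * w l) :
    |productFunctional φ P - productFunctional ψ P| ≤
      ∑ G : Finset σ with k ≤ #G, ∑ p ∈ P.support, |P.coeff p| * (#G * ε * ∏ l ∈ G, w l) := by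
  have hlow (φ : σ → ℕ → ℝ) : productFunctional φ P =
      ∑ G : Finset σ with k ≤ #G,
        (-1) ^ #G * ∑ p ∈ P.support, P.coeff p * ∏ l ∈ G, (1 - φ l (p l)) := by
    rw [productFunctional_eq_sum_prod_one_sub, sum_filter_of_ne]
    intro G _ hG
    contrapose! hG
    rw [hP.sum_coeff_mul_prod_eq_zero hG fun l j => 1 - φ l j, mul_zero]
  rw [hlow φ, hlow ψ, ← sum_sub_distrib]
  refine (abs_sum_le_sum_abs _ _).trans (sum_le_sum fun G _ => ?_)
  rw [← mul_sub, ← sum_sub_distrib, abs_mul, abs_pow, abs_neg, abs_one, one_pow, one_mul]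
  refine (abs_sum_le_sum_abs _ _).trans (sum_le_sum fun p hp => ?_)
  rw [← mul_sub, abs_mul]
  refine mul_le_mul_of_nonneg_left
    (abs_prod_sub_prod_le G hε (hφ p hp) (hψ p hp) fun l => ?_) (abs_nonneg _)
  rw [sub_sub_sub_cancel_left, abs_sub_comm]
  exact hφψ p hp l

end Perturbation

section BernsteinApproximation

variable {σ : Type*} [Fintype σ] {k : ℕ} {P : MvPolynomial σ ℝ}

lemma sum_mul_prod_le_eval_esymmOneSub {x : σ → ℝ} (hx0 : ∀ l, 0 ≤ x l) (hx1 : ∀ l, x l ≤ 1)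
    {M : ℝ} (hM : 1 ≤ M) {a : Finset σ → ℝ} (ha : ∀ G, 0 ≤ a G) :
    ∑ G : Finset σ with k ≤ #G, a G * ∏ l ∈ G, M * (1 - x l) ≤
      (∑ G, a G) * (M ^ Fintype.card σ * MvPolynomial.eval x (esymmOneSub σ k)) := by
  have hE : 0 ≤ M ^ Fintype.card σ * MvPolynomial.eval x (esymmOneSub σ k) :=
    mul_nonneg (by positivity) (eval_esymmOneSub_nonneg hx1)
  rw [sum_mul]
  calc ∑ G : Finset σ with k ≤ #G, a G * ∏ l ∈ G, M * (1 - x l)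
      ≤ ∑ G : Finset σ with k ≤ #G,
          a G * (M ^ Fintype.card σ * MvPolynomial.eval x (esymmOneSub σ k)) := by
        refine sum_le_sum fun G hG => mul_le_mul_of_nonneg_left ?_ (ha G)
        rw [prod_mul_distrib, prod_const]
        exact mul_le_mul (pow_le_pow_right₀ hM (card_le_univ G))
          (prod_one_sub_le_eval_esymmOneSub hx0 hx1 (mem_filter.1 hG).2)
          (prod_nonneg fun l _ => sub_nonneg.2 (hx1 l)) (by positivity)
    _ ≤ ∑ G, a G * (M ^ Fintype.card σ * MvPolynomial.eval x (esymmOneSub σ k)) :=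
        sum_le_sum_of_subset_of_nonneg (filter_subset _ _) fun G _ _ => mul_nonneg (ha G) hE

theorem VanishesOnFlats.exists_abs_bernsteinCoeff_sub_eval_le (hP : VanishesOnFlats k P) :
    ∃ C, ∀ N, 2 * P.totalDegree < N → ∀ i : σ → ℕ, (∀ l, i l ≤ N) →
      |bernsteinCoeff N i P - MvPolynomial.eval (fun l => (i l / N : ℝ)) P| ≤
        C / N * MvPolynomial.eval (fun l => (i l / N : ℝ)) (esymmOneSub σ k) := by
  set d := P.totalDegree
  set M : ℝ := (d + 1) ^ 2
  set a : Finset σ → ℝ := fun G => ∑ p ∈ P.support, |P.coeff p| * #G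
  refine ⟨(∑ G, a G) * M ^ Fintype.card σ, fun N hN i hi => ?_⟩
  have hN0 : 0 < (N : ℝ) := by exact_mod_cast (Nat.zero_le _).trans_lt hN
  have hx0 (l : σ) : 0 ≤ (i l / N : ℝ) := by positivity
  have hx1 (l : σ) : (i l / N : ℝ) ≤ 1 :=
    div_le_one_of_le₀ (by exact_mod_cast hi l) hN0.le
  have hdeg : ∀ p ∈ P.support, ∀ l, p l ≤ d := fun p hp l =>
    (MvPolynomial.degreeOf_le_iff.1 (MvPolynomial.degreeOf_le_totalDegree P l)) p hp
  rw [← productFunctional_pow]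
  calc |bernsteinCoeff N i P - productFunctional (fun l j => (i l / N : ℝ) ^ j) P|
      ≤ ∑ G : Finset σ with k ≤ #G,
          ∑ p ∈ P.support, |P.coeff p| * (#G * (1 / N) * ∏ l ∈ G, M * (1 - i l / N)) :=
        hP.abs_productFunctional_sub_le (by positivity)
          (fun p hp l => abs_one_sub_chooseRatio_le (hi l) (hdeg p hp l) hN)
          (fun p hp l => abs_one_sub_pow_le (hx0 l) (hx1 l) (hdeg p hp l))
          fun p hp l => abs_chooseRatio_sub_pow_le_of_le (hi l) (hdeg p hp l) hN
    _ = 1 / N * ∑ G : Finset σ with k ≤ #G, a G * ∏ l ∈ G, M * (1 - i l / N) := by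
        simp only [a, mul_sum, sum_mul]
        exact sum_congr rfl fun G _ => sum_congr rfl fun p _ => by ring
    _ ≤ 1 / N * ((∑ G, a G) * (M ^ Fintype.card σ *
          MvPolynomial.eval (fun l => (i l / N : ℝ)) (esymmOneSub σ k))) :=
        mul_le_mul_of_nonneg_left (sum_mul_prod_le_eval_esymmOneSub hx0 hx1
          (one_le_pow₀ (by simp)) fun G => by positivity) (by positivity)
    _ = _ := by ring

theorem HausdorffPositive.nonneg_of_eval_nonneg {L : MvPolynomial σ ℝ →ₗ[ℝ] ℝ}
    (hL : HausdorffPositive k L) (hP : VanishesOnFlats k P)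
    (hcube : ∀ x : σ → ℝ, (∀ l, 0 ≤ x l) → (∀ l, x l ≤ 1) → 0 ≤ MvPolynomial.eval x P) :
    0 ≤ L P := by
  obtain ⟨C, hC⟩ := hP.exists_abs_bernsteinCoeff_sub_eval_le
  have hlarge : ∀ N : ℕ, 2 * P.totalDegree < N → 0 ≤ L P + C / N * L (esymmOneSub σ k) := by
    intro N hN
    rw [← smul_eq_mul, ← map_smul, ← map_add]
    refine hL.nonneg_of_bernsteinCoeff_nonneg (hP.add (vanishesOnFlats_esymmOneSub.smul _))
      (N := N) (fun l => ?_) fun i hi => ?_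
    · refine (MvPolynomial.degreeOf_add_le _ _ _).trans (max_le ?_ ?_)
      · have := MvPolynomial.degreeOf_le_totalDegree P l
        lia
      · rw [MvPolynomial.smul_eq_C_mul]
        have := (MvPolynomial.degreeOf_C_mul_le (esymmOneSub σ k) l (C / N)).trans
          (degreeOf_esymmOneSub_le_one l)
        lia
    · rw [map_add, map_smul, smul_eq_mul,
        bernsteinCoeff_eq_eval_of_degreeOf_le_one degreeOf_esymmOneSub_le_one]
      have happrox := neg_le_of_abs_le (hC N hN i hi)
      have hnode := hcube (fun l => (i l / N : ℝ)) (fun l => by positivity)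
        fun l => div_le_one_of_le₀ (by exact_mod_cast hi l) (by positivity)
      linarith
  have hlim : Filter.Tendsto (fun N : ℕ => L P + C / N * L (esymmOneSub σ k)) Filter.atTop
      (nhds (L P + 0 * L (esymmOneSub σ k))) :=
    ((tendsto_const_div_atTop_nhds_zero_nat C).mul_const _).const_add _
  rw [zero_mul, add_zero] at hlim
  exact ge_of_tendsto hlim ((Filter.eventually_gt_atTop _).mono hlarge)

end BernsteinApproximation

section PositiveSemidefinite

variable {Z : Type*}

lemma sum_mul_nonneg_of_posSemidef [Fintype Z] {A : Matrix Z Z ℝ} (hA : A.PosSemidef)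
    (c : Z → ℝ) : 0 ≤ ∑ a, ∑ b, c a * c b * A a b := by
  refine (hA.dotProduct_mulVec_nonneg c).trans_eq ?_
  simp only [dotProduct, Matrix.mulVec, mul_sum, star_trivial]
  exact sum_congr rfl fun a _ => sum_congr rfl fun b _ => by ring

lemma posSemidef_of_tendsto {T : Type*} {l : Filter T} [l.NeBot] {A : T → Matrix Z Z ℝ}
    {B : Matrix Z Z ℝ} (hA : ∀ᶠ s in l, (A s).PosSemidef)
    (hlim : ∀ a b, Filter.Tendsto (fun s => A s a b) l (nhds (B a b))) : B.PosSemidef := by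
  refine ⟨Matrix.IsHermitian.ext fun a b => ?_, fun c => ?_⟩
  · refine tendsto_nhds_unique ((hlim b a).congr' ?_) (hlim a b)
    filter_upwards [hA] with s hs using by simpa using hs.isHermitian.apply a b
  · refine ge_of_tendsto (tendsto_finsetSum _ fun a _ => tendsto_finsetSum _ fun b _ =>
      ((hlim a b).const_mul (star (c a))).mul_const (c b)) ?_
    filter_upwards [hA] with s hs using hs.2 c

lemma posSemidef_of_mul (f : Z → ℝ) : (Matrix.of fun a b => f a * f b).PosSemidef := by
  refine ⟨Matrix.IsHermitian.ext fun a b => mul_comm _ _, fun c => ?_⟩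
  have hsquare : (c.sum fun a ca => c.sum fun b cb => star ca * (f a * f b) * cb) =
      (∑ a ∈ c.support, c a * f a) ^ 2 := by
    rw [sq, sum_mul_sum]
    exact sum_congr rfl fun a _ => sum_congr rfl fun b _ => by rw [star_trivial]; ring
  exact (sq_nonneg _).trans_eq hsquare.symm

lemma posSemidef_of_one : (Matrix.of fun _ _ : Z => (1 : ℝ)).PosSemidef := by
  simpa only [mul_one] using posSemidef_of_mul fun _ : Z => 1

lemma posSemidef_of_pow {A : Matrix Z Z ℝ} (hA : A.PosSemidef) (p : ℕ) :
    (Matrix.of fun a b => A a b ^ p).PosSemidef := by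
  induction p with
  | zero => simpa only [pow_zero] using posSemidef_of_one
  | succ p ih =>
    simp only [pow_succ]
    exact ih.hadamard hA

lemma posSemidef_of_exp {A : Matrix Z Z ℝ} (hA : A.PosSemidef) :
    (Matrix.of fun a b => Real.exp (A a b)).PosSemidef := by
  refine posSemidef_of_tendsto (l := Filter.atTop)
    (A := fun s : Finset ℕ => ∑ p ∈ s, (p.factorial : ℝ)⁻¹ • Matrix.of fun a b => A a b ^ p)
    (.of_forall fun s => Matrix.posSemidef_sum s fun p _ =>
      (posSemidef_of_pow hA p).smul (by positivity)) fun a b => ?_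
  have hseries := NormedSpace.expSeries_div_hasSum_exp (A a b)
  simp only [div_eq_inv_mul, ← Real.exp_eq_exp_ℝ] at hseries
  simpa only [Matrix.sum_apply, Matrix.smul_apply, Matrix.of_apply, smul_eq_mul] using! hseries

lemma posSemidef_of_prod {σ : Type*} {Y : σ → Type*} {K : ∀ l, Matrix (Y l) (Y l) ℝ}
    (hK : ∀ l, (K l).PosSemidef) (s : Finset σ) :
    (Matrix.of fun a b : ∀ l, Y l => ∏ l ∈ s, K l (a l) (b l)).PosSemidef := by
  classical
  induction s using Finset.induction_on with
  | empty => simpa only [prod_empty] using posSemidef_of_one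
  | insert l s hl ih =>
    simp only [prod_insert hl]
    exact ((hK l).submatrix fun a : ∀ l, Y l => a l).hadamard ih

end PositiveSemidefinite

section ConditionallyNegative

variable {Z : Type*} {γ : Z → Z → ℝ}

lemma IsCND.sum_nonpos {T : Type*} [Fintype T] (hγ : IsCND γ) (z : T → Z) {c : T → ℝ}
    (hc : ∑ i, c i = 0) : ∑ i, ∑ j, c i * c j * γ (z i) (z j) ≤ 0 := by
  set e := (Fintype.equivFin T).symm
  have := hγ.2 _ (z ∘ e) (c ∘ e) ((e.sum_comp c).trans hc)
  rw [← e.sum_comp]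
  refine le_of_eq_of_le (sum_congr rfl fun i _ => ?_) this
  rw [← e.sum_comp]
  rfl

lemma isCND_of_fintype [Fintype Z] (hsymm : ∀ a b, γ a b = γ b a)
    (hγ : ∀ c : Z → ℝ, ∑ a, c a = 0 → ∑ a, ∑ b, c a * c b * γ a b ≤ 0) : IsCND γ := by
  classical
  refine ⟨hsymm, fun m z c hc => ?_⟩
  set d : Z → ℝ := fun a => ∑ i with z i = a, c i
  have hpush : ∀ f : Z → ℝ, ∑ i, c i * f (z i) = ∑ a, d a * f a := fun f => by
    rw [← sum_fiberwise _ z]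
    refine sum_congr rfl fun a _ => ?_
    rw [sum_mul]
    exact sum_congr rfl fun i hi => by rw [(mem_filter.1 hi).2]
  have hd : ∑ a, d a = 0 := by
    simpa only [mul_one, hc] using (hpush fun _ => 1).symm
  have hquad := hγ d hd
  simp only [mul_assoc, ← mul_sum] at hquad ⊢
  simp only [hpush]
  rwa [hpush fun a => ∑ b, d b * γ a b]

lemma IsCND.comp {W : Type*} (hγ : IsCND γ) (f : W → Z) : IsCND fun a b => γ (f a) (f b) :=
  ⟨fun _ _ => hγ.1 _ _, fun m z => hγ.2 m (f ∘ z)⟩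

lemma IsCND.add {δ : Z → Z → ℝ} (hγ : IsCND γ) (hδ : IsCND δ) :
    IsCND fun a b => γ a b + δ a b :=
  ⟨fun a b => congrArg₂ _ (hγ.1 a b) (hδ.1 a b), fun m z c hc => by
    simpa only [mul_add, sum_add_distrib] using add_nonpos (hγ.2 m z c hc) (hδ.2 m z c hc)⟩

lemma IsCND.const_mul (hγ : IsCND γ) {r : ℝ} (hr : 0 ≤ r) : IsCND fun a b => r * γ a b :=
  ⟨fun a b => congrArg _ (hγ.1 a b), fun m z c hc => by
    simpa only [mul_left_comm _ r, ← mul_sum] using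
      mul_nonpos_of_nonneg_of_nonpos hr (hγ.2 m z c hc)⟩

lemma IsCND.posSemidef_centred (hγ : IsCND γ) (z : Z) :
    (Matrix.of fun a b => γ a z + γ b z - γ a b - γ z z).PosSemidef := by
  refine ⟨Matrix.IsHermitian.ext fun a b => ?_, fun c => ?_⟩
  · simp only [Matrix.of_apply, star_trivial, hγ.1 b a]
    ring
  · set S := ∑ a : c.support, c a
    have hcnd := hγ.sum_nonpos (fun o : Option c.support => o.elim z (↑))
      (c := fun o => o.elim (-S) fun a => c a) (by simp [S])
    have hcross : ∑ a : c.support, -S * c a * γ a z = -S * ∑ a : c.support, c a * γ a z := by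
      rw [mul_sum]; exact sum_congr rfl fun _ _ => mul_assoc _ _ _
    have hexpand : (c.sum fun a ca => c.sum fun b cb =>
        star ca * (γ a z + γ b z - γ a b - γ z z) * cb) =
        2 * S * ∑ a : c.support, c a * γ a z -
          ∑ a : c.support, ∑ b : c.support, c a * c b * γ a b - S * S * γ z z := by
      have hterm : ∀ a b : c.support, c a * (γ a z + γ b z - γ a b - γ z z) * c b =
          c a * γ a z * c b + c a * (c b * γ b z) - c a * c b * γ a b - c a * c b * γ z z :=
        fun a b => by ring
      simp only [Finsupp.sum, ← sum_coe_sort c.support, star_trivial, hterm, sum_sub_distrib,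
        sum_add_distrib, ← mul_sum, ← sum_mul]
      ring
    simp only [Fintype.sum_option, Option.elim, sum_add_distrib, hγ.1 z, mul_comm _ (-S),
      hcross] at hcnd
    refine hexpand.trans_ge ?_
    linarith

lemma IsCND.posSemidef_exp_neg (hγ : IsCND γ) {r : ℝ} (hr : 0 ≤ r) :
    (Matrix.of fun a b => Real.exp (-(r * γ a b))).PosSemidef := by
  rcases isEmpty_or_nonempty Z with hZ | ⟨⟨z⟩⟩
  · exact ⟨Matrix.IsHermitian.ext fun a => hZ.elim a, fun c => by simp [Subsingleton.elim c 0]⟩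
  have hfactor : ∀ a b, Real.exp (-(r * γ a b)) =
      Real.exp (r * (γ z z / 2 - γ a z)) * Real.exp (r * (γ z z / 2 - γ b z)) *
        Real.exp (r * (γ a z + γ b z - γ a b - γ z z)) := fun a b => by
    rw [← Real.exp_add, ← Real.exp_add]
    ring_nf
  simp only [hfactor]
  exact (posSemidef_of_mul fun a => Real.exp (r * (γ z z / 2 - γ a z))).hadamard
    (posSemidef_of_exp ((hγ.posSemidef_centred z).smul hr))

theorem IsCND.posSemidef_pow {J : Z → Z → ℕ} (hJ : IsCND fun a b => (J a b : ℝ)) {x : ℝ}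
    (hx0 : 0 ≤ x) (hx1 : x ≤ 1) : (Matrix.of fun a b => x ^ J a b).PosSemidef := by
  have hpos : ∀ y ∈ Set.Ioc (0 : ℝ) 1, (Matrix.of fun a b => y ^ J a b).PosSemidef := by
    intro y hy
    convert hJ.posSemidef_exp_neg (neg_nonneg.2 (Real.log_nonpos hy.1.le hy.2)) using 4 with a b
    rw [← Real.rpow_natCast, Real.rpow_def_of_pos hy.1]
    ring_nf
  have hmem : x ∈ closure (Set.Ioc (0 : ℝ) 1) := by
    rw [closure_Ioc zero_ne_one]
    exact ⟨hx0, hx1⟩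
  have := mem_closure_iff_nhdsWithin_neBot.1 hmem
  exact posSemidef_of_tendsto (eventually_mem_nhdsWithin.mono hpos) fun a b =>
    ((continuous_pow (J a b)).tendsto x).mono_left nhdsWithin_le_nhds

end ConditionallyNegative

section RoundedKernel

variable {Z : Type*} [Fintype Z] [DecidableEq Z] {γ : Z → Z → ℝ} {Q : ℕ}

lemma isCND_add_offDiag_of_abs_le_one {e : Z → Z → ℝ} (hsymm : ∀ a b, e a b = e b a)
    (he : ∀ a b, |e a b| ≤ 1) :
    IsCND fun a b => e a b + if a = b then 0 else (Fintype.card Z : ℝ) := by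
  refine isCND_of_fintype (fun a b => by simp only [hsymm a b, @eq_comm _ a b]) fun c hc => ?_
  have hterm : ∀ a b, c a * c b * (e a b + if a = b then 0 else (Fintype.card Z : ℝ)) ≤
      |c a| * |c b| + Fintype.card Z * (c a * c b) -
        if a = b then Fintype.card Z * c b ^ 2 else 0 := by
    intro a b
    have herror : c a * c b * e a b ≤ |c a| * |c b| := by
      refine (le_abs_self _).trans ?_
      rw [abs_mul, abs_mul]
      exact mul_le_of_le_one_right (by positivity) (he a b)
    split_ifs with hab
    · subst hab
      linarith [sq (c a)]
    · linarith
  refine (sum_le_sum fun a _ => sum_le_sum fun b _ => hterm a b).trans ?_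
  have hcauchy := sq_sum_le_card_mul_sum_sq (s := univ) (f := fun a => |c a|)
  simp only [sq_abs, card_univ] at hcauchy
  simp only [sum_sub_distrib, sum_add_distrib, sum_ite_eq, mem_univ, if_true, ← mul_sum,
    ← sum_mul, hc]
  linarith [sq (∑ a, |c a|)]

/-- An integer valued approximation of `Q * γ`. The off-diagonal constant compensates for the
rounding error and makes the approximation conditionally negative definite when `γ` is. -/
def roundedKernel (Q : ℕ) (γ : Z → Z → ℝ) (a b : Z) : ℕ :=
  ⌊γ a b * Q⌋₊ + if a = b then 0 else Fintype.card Z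

lemma IsCND.roundedKernel (hγ : IsCND γ) (hγpos : ∀ a b, 0 ≤ γ a b) (Q : ℕ) :
    IsCND fun a b => (roundedKernel Q γ a b : ℝ) := by
  have herror : IsCND fun a b => (⌊γ a b * Q⌋₊ - γ a b * Q : ℝ) +
      if a = b then 0 else (Fintype.card Z : ℝ) := by
    refine isCND_add_offDiag_of_abs_le_one (fun a b => by rw [hγ.1]) fun a b => ?_
    have := Nat.floor_le (mul_nonneg (hγpos a b) Q.cast_nonneg)
    have := Nat.lt_floor_add_one (γ a b * Q)
    exact abs_le.2 ⟨by linarith, by linarith⟩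
  convert (hγ.const_mul Q.cast_nonneg).add herror using 3 with a b
  simp only [PDIPaper.roundedKernel]
  push_cast
  ring

lemma tendsto_roundedKernel_div {a b : Z} (hγ : 0 ≤ γ a b) :
    Filter.Tendsto (fun Q : ℕ => (Q : ℝ)⁻¹ + roundedKernel Q γ a b * (Q : ℝ)⁻¹) Filter.atTop
      (nhds (γ a b)) := by
  have hfloor := (tendsto_nat_floor_mul_div_atTop hγ).comp (tendsto_natCast_atTop_atTop (R := ℝ))
  have hconst := (tendsto_inv_atTop_nhds_zero_nat (𝕜 := ℝ)).const_mul
    (1 + if a = b then 0 else (Fintype.card Z : ℝ))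
  have hsum := hfloor.add hconst
  rw [mul_zero, add_zero] at hsum
  refine hsum.congr fun Q => ?_
  simp only [roundedKernel, Function.comp_apply]
  push_cast
  ring

end RoundedKernel

section Energy

variable {σ : Type*} [Fintype σ] [DecidableEq σ] {k m : ℕ} {J : σ → Fin m → Fin m → ℕ}
  {c : (σ → Fin m) → ℝ}

/-- The polynomial in which the discrete measure with coefficients `c` is integrated twice
against the monomials `X ^ J`. Its image under `momentFunctional v` is the double integral of
the kernel `v ∘ J`. -/
def energyPolynomial (J : σ → Fin m → Fin m → ℕ) (c : (σ → Fin m) → ℝ) : MvPolynomial σ ℝ :=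
  ∑ α, ∑ β, MvPolynomial.monomial (Finsupp.equivFunOnFinite.symm fun l => J l (α l) (β l))
    (c α * c β)

lemma eval_energyPolynomial (J : σ → Fin m → Fin m → ℕ) (c : (σ → Fin m) → ℝ) (x : σ → ℝ) :
    MvPolynomial.eval x (energyPolynomial J c) =
      ∑ α, ∑ β, c α * c β * ∏ l, x l ^ J l (α l) (β l) := by
  simp only [energyPolynomial, map_sum, MvPolynomial.eval_monomial]
  exact sum_congr rfl fun α _ => sum_congr rfl fun β _ => by
    rw [Finsupp.prod_fintype _ _ fun _ => pow_zero _]; rfl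

lemma eval_energyPolynomial_nonneg (hJ : ∀ l, IsCND fun a b => (J l a b : ℝ))
    (c : (σ → Fin m) → ℝ) {x : σ → ℝ} (hx0 : ∀ l, 0 ≤ x l) (hx1 : ∀ l, x l ≤ 1) :
    0 ≤ MvPolynomial.eval x (energyPolynomial J c) := by
  rw [eval_energyPolynomial]
  exact sum_mul_nonneg_of_posSemidef
    (posSemidef_of_prod (fun l => (hJ l).posSemidef_pow (hx0 l) (hx1 l)) univ) c

lemma MemM.sum_mul_eq_zero_of_dependsOn (hc : MemM k c) (hk : k ≤ Fintype.card σ) {G : Finset σ}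
    (hG : #G < k) {θ : (σ → Fin m) → ℝ} (hθ : DependsOn θ G) : ∑ α, c α * θ α = 0 := by
  have hcard : Fintype.card σ - k + 1 ≤ #Gᶜ := by
    rw [card_compl]
    lia
  obtain ⟨F, hFG, hF⟩ := exists_subset_card_eq hcard
  rcases isEmpty_or_nonempty (σ → Fin m) with _ | ⟨⟨α₀⟩⟩
  · exact Fintype.sum_empty _
  set e := Equiv.piEquivPiSubtypeProd (· ∈ F) fun _ => Fin m
  rw [← e.symm.sum_comp, Fintype.sum_prod_type, sum_comm]
  refine sum_eq_zero fun τ _ => ?_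
  set β := e.symm (fun l => α₀ l, τ)
  have hβ : ∀ ρ : {l // l ∈ F} → Fin m,
      e.symm (ρ, τ) = fun l => if hl : l ∈ F then ρ ⟨l, hl⟩ else β l := by
    intro ρ
    ext l
    by_cases hl : l ∈ F <;> simp [e, β, Equiv.piEquivPiSubtypeProd, hl]
  have hθβ : ∀ ρ, θ (e.symm (ρ, τ)) = θ β := fun ρ => hθ fun l hl => by
    have hlF : l ∉ F := fun h => mem_compl.1 (hFG h) hl
    simp only [hβ, dif_neg hlF]
  simp only [hθβ, ← sum_mul]
  simp only [hβ, hc F hF β, zero_mul]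

lemma MemM.vanishesOnFlats_energyPolynomial (hc : MemM k c) (hk : k ≤ Fintype.card σ)
    (J : σ → Fin m → Fin m → ℕ) : VanishesOnFlats k (energyPolynomial J c) := by
  intro G x hG hx
  rw [eval_energyPolynomial, sum_comm]
  refine sum_eq_zero fun β _ => ?_
  have hθ : DependsOn (fun α : σ → Fin m => ∏ l, x l ^ J l (α l) (β l)) (G : Set σ) := by
    refine fun α α' hα => prod_congr rfl fun l _ => ?_
    by_cases hl : l ∈ G
    · rw [hα l hl]
    · rw [hx l hl, one_pow, one_pow]
  simp only [mul_right_comm _ (c β), ← sum_mul, hc.sum_mul_eq_zero_of_dependsOn hk hG hθ, zero_mul]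

end Energy

theorem BernsteinOrder.energy_nonneg {n k m : ℕ} {g : (Fin n → ℝ) → ℝ} (hg : BernsteinOrder k g)
    (hk : k ≤ n) {J : Fin n → Fin m → Fin m → ℕ} (hJ : ∀ l, IsCND fun a b => (J l a b : ℝ))
    {c : (Fin n → Fin m) → ℝ} (hc : MemM k c) {h : ℝ} (hh : 0 ≤ h) {t : Fin n → ℝ}
    (ht : t ∈ openOrthant n) :
    0 ≤ (-1) ^ k * ∑ α, ∑ β, c α * c β * g fun l => t l + J l (α l) (β l) * h := by
  have hpos := (hg.hausdorffPositive_latticeFunctional hh ht).nonneg_of_eval_nonneg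
    (hc.vanishesOnFlats_energyPolynomial (hk.trans_eq (Fintype.card_fin n).symm) J)
    fun x => eval_energyPolynomial_nonneg hJ c
  simpa only [LinearMap.smul_apply, energyPolynomial, map_sum, latticeFunctional,
    momentFunctional_monomial, smul_eq_mul, ← mul_sum,
    Finsupp.equivFunOnFinite_symm_apply_apply] using hpos

lemma nSymm_of_forall_symm {σ : Type*} {Y : σ → Type*} {γ : ∀ i, Y i → Y i → ℝ}
    (hγ : ∀ i a b, γ i a b = γ i b a) (g : (σ → ℝ) → ℝ) :
    NSymm fun x1 x2 : ∀ i, Y i => g fun i => γ i (x1 i) (x2 i) := by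
  intro x1 x2 α
  refine congrArg g (funext fun i => ?_)
  cases hα : α i
  · simp [sel, hα]
  · simpa [sel, hα] using hγ i _ _

theorem statement15_general {n k : ℕ} (hk : k ≤ n) (X : Fin n → Type*)
    (γ : ∀ i, X i → X i → ℝ) (hγpos : ∀ i a b, 0 ≤ γ i a b)
    (hγ : ∀ i, IsCND (γ i))
    (g : (Fin n → ℝ) → ℝ)
    (hgc : ContinuousOn g {t : Fin n → ℝ | ∀ i, 0 ≤ t i})
    (hgb : BernsteinOrder k g) :
    IsPDI k (fun x1 x2 : ∀ i, X i => g fun i => γ i (x1 i) (x2 i)) := by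
  refine ⟨nSymm_of_forall_symm (fun i => (hγ i).1) g, fun m x _ c hc => ?_⟩
  set J : ℕ → Fin n → Fin m → Fin m → ℕ := fun Q l =>
    roundedKernel Q fun a b => γ l (x l a) (x l b)
  have hround : ∀ Q : ℕ, 0 < Q → 0 ≤ (-1) ^ k *
      ∑ α, ∑ β, c α * c β * g fun l => (Q : ℝ)⁻¹ + J Q l (α l) (β l) * (Q : ℝ)⁻¹ := fun Q hQ =>
    hgb.energy_nonneg hk (fun l => ((hγ l).comp (x l)).roundedKernel (fun a b => hγpos l _ _) Q)
      hc (by positivity) fun _ => by positivity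
  refine ge_of_tendsto (((tendsto_finsetSum _ fun α _ => tendsto_finsetSum _ fun β _ =>
    Filter.Tendsto.const_mul _ ?_).const_mul _)) ((Filter.eventually_gt_atTop 0).mono hround)
  refine (hgc _ fun l => hγpos l _ _).tendsto.comp (tendsto_nhdsWithin_iff.2 ⟨?_, ?_⟩)
  · exact tendsto_pi_nhds.2 fun l => tendsto_roundedKernel_div (hγpos l _ _)
  · exact .of_forall fun Q l => by positivity

theorem statement15 {n k : ℕ} (hk : k ≤ n) (X : Fin n → Type*)
    (γ : ∀ i, X i → X i → ℝ) (hγpos : ∀ i a b, 0 ≤ γ i a b)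
    (hγ : ∀ i, IsCND (γ i))
    (g : (Fin n → ℝ) → ℝ)
    (hgc : ContinuousOn g {t : Fin n → ℝ | ∀ i, 0 ≤ t i})
    (hgz : ∀ t : Fin n → ℝ, (∀ i, 0 ≤ t i) →
      (∀ s : Finset (Fin n), (∀ i ∈ s, 0 < t i) → s.card < k) → g t = 0)
    (hgb : BernsteinOrder k g) :
    IsPDI k (fun x1 x2 : ∀ i, X i => g fun i => γ i (x1 i) (x2 i)) :=
  statement15_general hk X γ hγpos hγ g hgc hgb

end PDIPaper
end
end
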